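/- Let p, q ≥ 1, let A_1,…,A_p, B_1,…,B_q be strictly positive and a_1,…,a_p, b_1,…,b_q be nonnegative reals with Σ_{i=1}^p A_i = Σ_{j=1}^q B_j, μ = Σ_{j=1}^q b_j − Σ_{k=1}^p a_k + (p−q)/2 > 0, and ρ = ∏_{k=1}^p A_k^{A_k} · ∏_{j=1}^q B_j^{−B_j} ≤ 1. Set γ = −min_{1≤k≤p}(a_k/A_k); for c > γ and 0 < x < ρ define H(x) = lim_{R→∞} (1/(2π)) ∫_{−R}^{R} [∏_{k=1}^p Γ(A_k(c+it)+a_k) / ∏_{j=1}^q Γ(B_j(c+it)+b_j)] · x^{−(c+it)} dt (a real number independent of c), and let Q(u) = Σ_{i=1}^p u^{a_i/A_i}/(1 − u^{1/A_i}) − Σ_{j=1}^q u^{b_j/B_j}/(1 − u^{1/B_j}) for u ∈ (0,1). Then for every x ∈ (0,ρ): H(x) = (1/log(ρ/x)) · ∫_{x/ρ}^{1} H(x/u) · Q(u)/u du. -/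

import Mathlib

open MeasureTheory Filter

noncomputable def JJ (a t : ℝ) : ℝ := 1 / t - Real.exp (-(t * a)) / (1 - Real.exp (-t))

lemma exp_taylor_bd (x : ℝ) (hx : 0 ≤ x) : |Real.exp (-x) - (1 - x + x ^ 2 / 2)| ≤ x ^ 3 := by
  rcases le_or_gt x 1 with h | h
  · have := Real.exp_bound (x := -x) (by rw [abs_neg, abs_of_nonneg hx]; exact h) (n := 3) (by norm_num)
    simp [Finset.sum_range_succ, Nat.factorial] at this
    rw [abs_of_nonneg hx] at this
    have h3 : 0 ≤ x ^ 3 := by positivity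
    have e : Real.exp (-x) - (1 + -x + x ^ 2 / 2) = Real.exp (-x) - (1 - x + x ^ 2 / 2) := by ring
    rw [e] at this
    refine this.trans ?_
    norm_num
    linarith
  · have h1 : Real.exp (-x) ≤ 1 := by simpa using hx
    have h2 := Real.exp_pos (-x)
    rw [abs_le]
    constructor <;> nlinarith [sq_nonneg (x - 1), mul_pos (show 0 < x by linarith) (show 0 < x - 1 by linarith), mul_pos (mul_pos (show 0 < x by linarith) (show 0 < x by linarith)) (show 0 < x - 1 by linarith)]

lemma one_sub_exp_lb (t : ℝ) (ht : 0 < t) : t / (1 + t) ≤ 1 - Real.exp (-t) := by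
  have h1 : 1 + t ≤ Real.exp t := by linarith [Real.add_one_le_exp t]
  have h2 : Real.exp (-t) ≤ 1 / (1 + t) := by
    rw [Real.exp_neg, ← one_div]
    exact one_div_le_one_div_of_le (by linarith) h1
  have h3 : t / (1 + t) = 1 - 1 / (1 + t) := by field_simp; ring
  linarith

lemma JJ_bound (a : ℝ) (ha : 0 ≤ a) : ∃ M : ℝ, 0 < M ∧ ∀ t : ℝ, 0 < t →
    |JJ a t| ≤ M ∧ |JJ a t - (a - 1 / 2)| ≤ M * t := by
  refine ⟨10 * (1 + a + a ^ 2 + a ^ 3), by positivity, ?_⟩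
  intro t ht
  have hlb := one_sub_exp_lb t ht
  have hE : 0 < 1 - Real.exp (-t) := lt_of_lt_of_le (by positivity) hlb
  have ha2 : 0 ≤ a ^ 2 := by positivity
  have ha3 : 0 ≤ a ^ 3 := by positivity
  rcases le_or_gt t 1 with h | h
  · have hlb2 : t / 2 ≤ 1 - Real.exp (-t) := by
      refine le_trans ?_ hlb
      exact div_le_div_of_nonneg_left ht.le (by linarith) (by linarith)
    have key : |JJ a t - (a - 1 / 2)| ≤ 2 * (4 + 2 * a + a ^ 2 + a ^ 3) * t := by
      obtain ⟨e1, he1⟩ : ∃ e1, Real.exp (-t) - (1 - t + t ^ 2 / 2) = e1 := ⟨_, rfl⟩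
      obtain ⟨e2, he2⟩ : ∃ e2, Real.exp (-(t * a)) - (1 - t * a + (t * a) ^ 2 / 2) = e2 := ⟨_, rfl⟩
      have b1 := exp_taylor_bd t ht.le
      have b2 := exp_taylor_bd (t * a) (by positivity)
      rw [he1] at b1
      rw [he2] at b2
      have E1 : Real.exp (-t) = 1 - t + t ^ 2 / 2 + e1 := by linarith
      have E2 : Real.exp (-(t * a)) = 1 - t * a + (t * a) ^ 2 / 2 + e2 := by linarith
      have N : JJ a t - (a - 1 / 2) = (-e1 - t ^ 3 * (a ^ 2 / 2) - t * e2 + (a - 1 / 2) * (t ^ 3 / 2)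
          + (a - 1 / 2) * t * e1) / (t * (1 - Real.exp (-t))) := by
        rw [eq_div_iff (by positivity)]
        unfold JJ
        rw [sub_mul, sub_mul]
        have q1 : 1 / t * (t * (1 - Real.exp (-t))) = 1 - Real.exp (-t) := by field_simp
        have q2 : Real.exp (-(t * a)) / (1 - Real.exp (-t)) * (t * (1 - Real.exp (-t)))
          = t * Real.exp (-(t * a)) := by field_simp
        rw [q1, q2, E1, E2]
        ring
      rw [N, abs_div, abs_of_pos (show 0 < t * (1 - Real.exp (-t)) by positivity),
        div_le_iff₀ (by positivity)]
      have ht3 : 0 < t ^ 3 := by positivity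
      have c1 : |a - 1 / 2| ≤ a + 1 := by rw [abs_le]; constructor <;> linarith
      have d2 : |t * e2| ≤ t ^ 3 * a ^ 3 := by
        rw [abs_mul, abs_of_pos ht]
        have : t * |e2| ≤ 1 * (t * a) ^ 3 := by gcongr
        linarith [mul_pow t a 3]
      have d3 : |(a - 1 / 2) * (t ^ 3 / 2)| ≤ (a + 1) * t ^ 3 := by
        rw [abs_mul, abs_of_pos (show 0 < t ^ 3 / 2 by positivity)]
        gcongr; linarith
      have d4 : |(a - 1 / 2) * t * e1| ≤ (a + 1) * t ^ 3 := by
        rw [abs_mul, abs_mul, abs_of_pos ht]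
        calc |a - 1 / 2| * t * |e1| ≤ (a + 1) * 1 * t ^ 3 := by gcongr
          _ = _ := by ring
      have tot : |-e1 - t ^ 3 * (a ^ 2 / 2) - t * e2 + (a - 1 / 2) * (t ^ 3 / 2)
          + (a - 1 / 2) * t * e1| ≤ (4 + 2 * a + a ^ 2 + a ^ 3) * t ^ 3 := by
        rw [abs_le] at *
        constructor <;> nlinarith [mul_nonneg ht3.le ha2, mul_nonneg ht3.le ha]
      refine tot.trans ?_
      have : t * (t * (t / 2)) ≤ t * (t * (1 - Real.exp (-t))) := by gcongr
      have h4 : 0 ≤ 4 + 2 * a + a ^ 2 + a ^ 3 := by positivity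
      nlinarith [mul_le_mul_of_nonneg_left this h4]
    have c1 : |a - 1 / 2| ≤ a + 1 := by rw [abs_le]; constructor <;> linarith
    constructor
    · have : |JJ a t| ≤ |JJ a t - (a - 1 / 2)| + |a - 1 / 2| := by
        have := abs_add_le (JJ a t - (a - 1 / 2)) (a - 1 / 2); simpa using this
      have h5 : 2 * (4 + 2 * a + a ^ 2 + a ^ 3) * t ≤ 2 * (4 + 2 * a + a ^ 2 + a ^ 3) * 1 := by gcongr
      linarith
    · refine key.trans (mul_le_mul_of_nonneg_right ?_ ht.le)
      linarith
  · have hlb2 : 1 / 2 ≤ 1 - Real.exp (-t) := by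
      refine le_trans ?_ hlb
      rw [div_le_div_iff₀] <;> linarith
    have h1 : 1 / t ≤ 1 := by rw [div_le_one ht]; exact h.le
    have h1' : 0 < 1 / t := by positivity
    have h2 : Real.exp (-(t * a)) ≤ 1 := by simp; positivity
    have h2' := Real.exp_pos (-(t * a))
    have h3 : Real.exp (-(t * a)) / (1 - Real.exp (-t)) ≤ 2 := by
      rw [div_le_iff₀ hE]; linarith
    have h3' : 0 < Real.exp (-(t * a)) / (1 - Real.exp (-t)) := by positivity
    have hJ : |JJ a t| ≤ 2 := by
      unfold JJ; rw [abs_le]; constructor <;> linarith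
    refine ⟨by linarith, ?_⟩
    have : |JJ a t - (a - 1 / 2)| ≤ 3 + a := by
      rw [abs_le] at *; constructor <;> linarith
    have h6 : 10 * (1 + a + a ^ 2 + a ^ 3) * 1 ≤ 10 * (1 + a + a ^ 2 + a ^ 3) * t := by gcongr
    linarith

lemma JJ_cont (a : ℝ) : ContinuousOn (JJ a) (Set.Ioi 0) := by
  unfold JJ
  refine ContinuousOn.sub ?_ ?_
  · exact continuousOn_const.div continuousOn_id (fun x hx => ne_of_gt hx)
  · refine ContinuousOn.div (by fun_prop) (by fun_prop) ?_
    intro x hx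
    have := one_sub_exp_lb x hx
    have h2 : 0 < x / (1 + x) := by have : 0 < x := hx; positivity
    linarith

lemma exp_mul_bdd_integrable (y M : ℝ) (hy : 0 < y) (f : ℝ → ℝ) (hf : ContinuousOn f (Set.Ioi 0))
    (hM : ∀ t, 0 < t → |f t| ≤ M) :
    IntegrableOn (fun t => Real.exp (-(t * y)) * f t) (Set.Ioi 0) := by
  have h1 : IntegrableOn (fun t => M * Real.exp (-y * t)) (Set.Ioi 0) :=
    (exp_neg_integrableOn_Ioi 0 hy).const_mul M
  refine Integrable.mono' h1 ?_ ?_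
  · exact (ContinuousOn.mul (by fun_prop) hf).aestronglyMeasurable measurableSet_Ioi
  · refine (ae_restrict_iff' measurableSet_Ioi).2 (Eventually.of_forall fun t ht => ?_)
    rw [norm_mul, Real.norm_eq_abs, Real.norm_eq_abs, Real.abs_exp, mul_comm M,
      show -(t * y) = -y * t by ring]
    gcongr
    exact hM t ht

lemma exp_mul_bdd_abs (y M : ℝ) (hy : 0 < y) (f : ℝ → ℝ)
    (hM : ∀ t, 0 < t → |f t| ≤ M) :
    |∫ t in Set.Ioi (0:ℝ), Real.exp (-(t * y)) * f t| ≤ M / y := by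
  have h1 : IntegrableOn (fun t => M * Real.exp (-y * t)) (Set.Ioi 0) :=
    (exp_neg_integrableOn_Ioi 0 hy).const_mul M
  have := norm_integral_le_of_norm_le (f := fun t => Real.exp (-(t * y)) * f t) h1 (by
    refine (ae_restrict_iff' measurableSet_Ioi).2 (Eventually.of_forall fun t ht => ?_)
    rw [norm_mul, Real.norm_eq_abs, Real.norm_eq_abs, Real.abs_exp, mul_comm M,
      show -(t * y) = -y * t by ring]
    gcongr
    exact hM t ht)
  rw [integral_const_mul, integral_exp_mul_Ioi (by linarith)] at this
  simpa [div_eq_mul_inv] using this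

lemma frullani_log (y : ℝ) (hy : 0 < y) :
    IntegrableOn (fun t => Real.exp (-(t * y)) * ((1 - Real.exp (-t)) / t)) (Set.Ioi 0) ∧
    ∫ t in Set.Ioi (0:ℝ), Real.exp (-(t * y)) * ((1 - Real.exp (-t)) / t) = Real.log ((y + 1) / y) := by
  have hI : IntegrableOn (fun t => Real.exp (-(t * y)) * ((1 - Real.exp (-t)) / t)) (Set.Ioi 0) := by
    refine exp_mul_bdd_integrable y 1 hy _ ?_ ?_
    · exact ContinuousOn.div (by fun_prop) (by fun_prop) (fun x hx => ne_of_gt hx)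
    · intro t ht
      have h1 := Real.one_sub_le_exp_neg t
      have h2 : Real.exp (-t) ≤ 1 := by simp; exact ht.le
      rw [abs_of_nonneg (div_nonneg (by linarith) ht.le), div_le_one ht]
      linarith
  refine ⟨hI, ?_⟩
  have e : ∀ t : ℝ, t⁻¹ • (Real.exp (-(y * t)) - Real.exp (-((y + 1) * t)))
      = Real.exp (-(t * y)) * ((1 - Real.exp (-t)) / t) := by
    intro t
    rw [show -((y + 1) * t) = -(t * y) + -t by ring, Real.exp_add, show y * t = t * y by ring, smul_eq_mul]
    ring
  have := Frullani.integral_Ioi_eq (f := fun x : ℝ => Real.exp (-x)) (a := y) (b := y + 1) (L := 1) (R := 0)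
    (by exact ContinuousOn.locallyIntegrableOn (by fun_prop) measurableSet_Ioi) hy (by linarith)
    (by
      have : Continuous (fun x : ℝ => Real.exp (-x)) := by fun_prop
      have := this.tendsto 0
      simp only [neg_zero, Real.exp_zero] at this
      exact this.mono_left nhdsWithin_le_nhds)
    (Real.tendsto_exp_neg_atTop_nhds_zero)
    (by simp only [e]; exact hI)
  simp only [e] at this
  simpa using this

lemma logGamma_deriv (a y : ℝ) (ha : 0 ≤ a) (hy : 0 < y) :
    HasDerivAt (fun x => Real.log (Real.Gamma x))
      (Real.log y + ∫ t in Set.Ioi (0:ℝ), Real.exp (-(t * y)) * JJ a t) (y + a) := by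
  let f := Real.log ∘ Real.Gamma
  have hc : ConvexOn ℝ (Set.Ioi 0) f := Real.convexOn_log_Gamma
  have h_rec (x : ℝ) (hx : 0 < x) : f (x + 1) = f x + Real.log x := by
    simp only [f, Function.comp_apply,
      Real.Gamma_add_one hx.ne', Real.log_mul hx.ne' (Real.Gamma_pos_of_pos hx).ne', add_comm]
  have hder {x : ℝ} (hx : 0 < x) : DifferentiableAt ℝ f x := by
    refine ((Real.differentiableAt_Gamma ?_).log (Real.Gamma_ne_zero ?_)) <;>
    exact fun m ↦ ne_of_gt (by have : (0:ℝ) ≤ m := Nat.cast_nonneg m; linarith)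
  have hder_rec (x : ℝ) (hx : 0 < x) : deriv f (x + 1) = deriv f x + 1 / x := by
    rw [← deriv_comp_add_const, one_div, ← Real.deriv_log,
      ← deriv_add (hder <| by positivity) (Real.differentiableAt_log hx.ne')]
    apply EventuallyEq.deriv_eq
    filter_upwards [eventually_gt_nhds hx] using h_rec
  have derivUB (x : ℝ) (hx : 0 < x) : deriv f x ≤ Real.log x := by
    refine (hc.deriv_le_slope (y := x + 1) hx (Set.mem_Ioi.2 (by linarith)) (by linarith) (hder hx)).trans (le_of_eq ?_)
    rw [slope_def_field, h_rec x hx]; simp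
  have derivLB (x : ℝ) (hx : 0 < x) : Real.log x ≤ deriv f x + 1 / x := by
    rw [← hder_rec x hx]
    refine (le_of_eq ?_).trans <| hc.slope_le_deriv (x := x) hx (Set.mem_Ioi.2 (by linarith)) (by linarith) (hder <| by linarith)
    rw [slope_def_field, h_rec x hx]; simp
  obtain ⟨M, hM0, hM⟩ := JJ_bound a ha
  set P : ℝ → ℝ := fun y => Real.log y + ∫ t in Set.Ioi (0:ℝ), Real.exp (-(t * y)) * JJ a t with hP
  have Pint (y : ℝ) (hy : 0 < y) := exp_mul_bdd_integrable y M hy (JJ a) (JJ_cont a) (fun t ht => (hM t ht).1)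
  have Pabs (y : ℝ) (hy : 0 < y) := exp_mul_bdd_abs y M hy (JJ a) (fun t ht => (hM t ht).1)
  have Prec (y : ℝ) (hy : 0 < y) : P (y + 1) = P y + 1 / (y + a) := by
    obtain ⟨F1, F2⟩ := frullani_log y hy
    have e : ∫ t in Set.Ioi (0:ℝ), (Real.exp (-(t * (y + 1))) * JJ a t - Real.exp (-(t * y)) * JJ a t
       + Real.exp (-(t * y)) * ((1 - Real.exp (-t)) / t)) = ∫ t in Set.Ioi (0:ℝ), Real.exp (-(y + a) * t) := by
      refine setIntegral_congr_fun measurableSet_Ioi ?_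
      intro t ht
      have ht : 0 < t := ht
      have hE : 0 < 1 - Real.exp (-t) := lt_of_lt_of_le (by positivity) (one_sub_exp_lb t ht)
      simp only [JJ]
      rw [show -(t * (y + 1)) = -(t * y) + -t by ring, Real.exp_add,
        show -(y + a) * t = -(t * y) + -(t * a) by ring, Real.exp_add]
      field_simp
      ring
    have I1 := Pint (y + 1) (by linarith)
    have I2 := Pint y hy
    rw [integral_add (f := fun t => Real.exp (-(t * (y + 1))) * JJ a t - Real.exp (-(t * y)) * JJ a t)
      (I1.sub I2) F1, integral_sub I1 I2, F2,
      integral_exp_mul_Ioi (by linarith)] at e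
    rw [Real.log_div (by linarith) hy.ne'] at e
    simp only [hP]
    have e2 : -Real.exp (-(y + a) * 0) / -(y + a) = 1 / (y + a) := by
      rw [mul_zero, Real.exp_zero, neg_div_neg_eq]
    rw [e2] at e
    linarith
  set D : ℝ → ℝ := fun y => deriv f (y + a) - P y with hD
  have Drec (y : ℝ) (hy : 0 < y) : D (y + 1) = D y := by
    simp only [hD]
    rw [Prec y hy, show y + 1 + a = (y + a) + 1 by ring, hder_rec _ (by linarith)]
    ring
  have Dnat (n : ℕ) : D (y + n) = D y := by
    induction n with
    | zero => simp
    | succ n ih => rw [← ih, ← Drec (y + n) (by positivity)]; push_cast; ring_nf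
  have Dbd (y : ℝ) (hy : 0 < y) : |D y| ≤ (1 + a + M) / y := by
    have h1 := derivUB (y + a) (by linarith)
    have h2 := derivLB (y + a) (by linarith)
    have h3 := Pabs y hy
    have h4 : Real.log y ≤ Real.log (y + a) := Real.log_le_log hy (by linarith)
    have h5 : Real.log (y + a) ≤ Real.log y + a / y := by
      have : Real.log ((y + a) / y) ≤ (y + a) / y - 1 := Real.log_le_sub_one_of_pos (by positivity)
      rw [Real.log_div (by linarith) hy.ne'] at this
      have e : (y + a) / y - 1 = a / y := by field_simp; ring
      linarith
    have h6 : 1 / (y + a) ≤ 1 / y := one_div_le_one_div_of_le hy (by linarith)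
    have h7 : 0 ≤ a / y := by positivity
    have h8 : 0 < 1 / y := by positivity
    rw [add_div, add_div]
    simp only [hD, hP]
    rw [abs_le] at *
    constructor <;> linarith
  have D0 : D y = 0 := by
    have l1 : Tendsto (fun n : ℕ => (1 + a + M) / (y + n)) atTop (nhds 0) :=
      tendsto_const_nhds.div_atTop (tendsto_atTop_add_const_left _ _ tendsto_natCast_atTop_atTop)
    have l2 : |D y| ≤ 0 := by
      refine ge_of_tendsto l1 (Eventually.of_forall fun n => ?_)
      rw [← Dnat n]
      exact Dbd _ (by positivity)
    exact abs_nonpos_iff.1 l2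
  have := (hder (x := y + a) (by linarith)).hasDerivAt
  have e : deriv f (y + a) = P y := by simp only [hD] at D0; linarith
  rw [e] at this
  exact this
open scoped BoundedContinuousFunction

noncomputable def GGi (μ l : ℝ) (r n : ℝ → ℝ) (W θ : ℝ) : ℝ :=
  θ ^ (μ - 1) * ((1 - θ) * Real.exp (-(l * (W * (1 - θ)))) * n (W * θ) * r (W * (1 - θ)))

noncomputable def GG (μ l : ℝ) (r n : ℝ → ℝ) (W : ℝ) : ℝ := ∫ θ in (0:ℝ)..1, GGi μ l r n W θ

lemma rpow_int01 (μ : ℝ) (hμ : 0 < μ) : IntervalIntegrable (fun θ : ℝ => θ ^ (μ - 1)) volume 0 1 ∧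
    ∫ θ in (0:ℝ)..1, θ ^ (μ - 1) = 1 / μ := by
  refine ⟨intervalIntegral.intervalIntegrable_rpow' (by linarith), ?_⟩
  rw [integral_rpow (Or.inl (by linarith))]
  simp [hμ.ne']

lemma GGi_meas (μ l : ℝ) (r n : ℝ → ℝ) (hr : Measurable r) (hn : Continuous n) :
    Measurable (fun x : ℝ × ℝ => GGi μ l r n x.1 x.2) := by
  unfold GGi
  have := hn.measurable
  fun_prop

lemma GGi_bound (μ l M N : ℝ) (hl : 0 < l) (r n : ℝ → ℝ) (hM : ∀ v, |r v| ≤ M) (hN : ∀ v, |n v| ≤ N)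
    (W θ : ℝ) (hW : 0 ≤ W) (h0 : 0 < θ) (h1 : θ ≤ 1) :
    |GGi μ l r n W θ| ≤ (M * N) * θ ^ (μ - 1) ∧ |W * GGi μ l r n W θ| ≤ (M * N / l) * θ ^ (μ - 1) := by
  have hM0 : 0 ≤ M := (abs_nonneg _).trans (hM 0)
  have hN0 : 0 ≤ N := (abs_nonneg _).trans (hN 0)
  have hθ : 0 < θ ^ (μ - 1) := Real.rpow_pos_of_pos h0 _
  have hb : |n (W * θ) * r (W * (1 - θ))| ≤ M * N := by
    rw [abs_mul, mul_comm M]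
    exact mul_le_mul (hN _) (hM _) (abs_nonneg _) hN0
  have hE := Real.exp_pos (-(l * (W * (1 - θ))))
  have hz : 0 ≤ W * (1 - θ) := mul_nonneg hW (by linarith)
  constructor
  · have e : GGi μ l r n W θ = θ ^ (μ - 1) * ((1 - θ) * Real.exp (-(l * (W * (1 - θ)))) *
      (n (W * θ) * r (W * (1 - θ)))) := by unfold GGi; ring
    rw [e, abs_mul, abs_of_pos hθ, mul_comm]
    gcongr
    rw [abs_mul, abs_of_nonneg (mul_nonneg (by linarith) hE.le)]
    have h2 : Real.exp (-(l * (W * (1 - θ)))) ≤ 1 := by simp; positivity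
    calc _ ≤ (1 * 1) * (M * N) := by
          gcongr
          linarith
      _ = _ := by ring
  · have e : W * GGi μ l r n W θ = θ ^ (μ - 1) * ((W * (1 - θ)) * Real.exp (-(l * (W * (1 - θ)))) *
      (n (W * θ) * r (W * (1 - θ)))) := by unfold GGi; ring
    rw [e, abs_mul, abs_of_pos hθ, mul_comm]
    gcongr
    rw [abs_mul, abs_of_nonneg (mul_nonneg hz hE.le)]
    have h2 : (W * (1 - θ)) * Real.exp (-(l * (W * (1 - θ)))) ≤ 1 / l := by
      rw [Real.exp_neg, ← div_eq_mul_inv, div_le_div_iff₀ (Real.exp_pos _) hl]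
      nlinarith [Real.add_one_le_exp (l * (W * (1 - θ)))]
    calc _ ≤ (1 / l) * (M * N) := by gcongr
      _ = _ := by ring

lemma GGi_int (μ l M N : ℝ) (hμ : 0 < μ) (hl : 0 < l) (r n : ℝ → ℝ) (hr : Measurable r) (hn : Continuous n)
    (hM : ∀ v, |r v| ≤ M) (hN : ∀ v, |n v| ≤ N)
    (W : ℝ) (hW : 0 ≤ W) : IntervalIntegrable (GGi μ l r n W) volume 0 1 := by
  refine IntervalIntegrable.mono_fun' ((rpow_int01 μ hμ).1.const_mul (M * N)) ?_ ?_
  · exact ((GGi_meas μ l r n hr hn).comp (measurable_const.prodMk measurable_id)).aestronglyMeasurable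
  · rw [Set.uIoc_of_le zero_le_one]
    refine (ae_restrict_iff' measurableSet_Ioc).2 (Eventually.of_forall fun t ht => ?_)
    exact (GGi_bound μ l M N hl r n hM hN W t hW ht.1 ht.2).1

lemma GG_bound (μ l M N : ℝ) (hμ : 0 < μ) (hl : 0 < l) (r n : ℝ → ℝ) (hM : ∀ v, |r v| ≤ M) (hN : ∀ v, |n v| ≤ N)
    (W : ℝ) (hW : 0 ≤ W) :
    |GG μ l r n W| ≤ M * N / μ ∧ |W * GG μ l r n W| ≤ M * N / l / μ := by
  obtain ⟨I1, I2⟩ := rpow_int01 μ hμ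
  constructor
  · have := intervalIntegral.norm_integral_le_of_norm_le (f := GGi μ l r n W) zero_le_one
      (Eventually.of_forall fun t ht => (GGi_bound μ l M N hl r n hM hN W t hW ht.1 ht.2).1) (I1.const_mul (M * N))
    rw [intervalIntegral.integral_const_mul, I2] at this
    unfold GG
    rw [Real.norm_eq_abs] at this
    convert this using 1; ring
  · have := intervalIntegral.norm_integral_le_of_norm_le (f := fun θ => W * GGi μ l r n W θ) zero_le_one
      (Eventually.of_forall fun t ht => (GGi_bound μ l M N hl r n hM hN W t hW ht.1 ht.2).2) (I1.const_mul (M * N / l))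
    rw [intervalIntegral.integral_const_mul, intervalIntegral.integral_const_mul, I2] at this
    unfold GG
    rw [Real.norm_eq_abs] at this
    convert this using 1; ring

lemma GG_contAt (μ l M N : ℝ) (hμ : 0 < μ) (hl : 0 < l) (r n : ℝ → ℝ) (hr : Measurable r) (hn : Continuous n)
    (hrc : ContinuousOn r (Set.Ioi 0))
    (hM : ∀ v, |r v| ≤ M) (hN : ∀ v, |n v| ≤ N)
    (W : ℝ) (hW : 0 < W) : ContinuousAt (GG μ l r n) W := by
  unfold GG
  refine intervalIntegral.continuousAt_of_dominated_interval (bound := fun θ => (M * N) * θ ^ (μ - 1)) ?_ ?_ ?_ ?_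
  · exact Eventually.of_forall fun w =>
      ((GGi_meas μ l r n hr hn).comp (measurable_const.prodMk measurable_id)).aestronglyMeasurable
  · filter_upwards [lt_mem_nhds hW] with w hw
    refine Eventually.of_forall fun t ht => ?_
    rw [Set.uIoc_of_le zero_le_one] at ht
    exact (GGi_bound μ l M N hl r n hM hN w t hw.le ht.1 ht.2).1
  · exact (rpow_int01 μ hμ).1.const_mul (M * N)
  · have : ∀ᵐ t : ℝ, t ≠ 1 := by simp [ae_iff]
    filter_upwards [this] with t ht1 ht
    rw [Set.uIoc_of_le zero_le_one] at ht
    have h1 : t < 1 := lt_of_le_of_ne ht.2 ht1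
    have hrr : ContinuousAt r (W * (1 - t)) :=
      hrc.continuousAt (Ioi_mem_nhds (mul_pos hW (by linarith)))
    have hrr2 : ContinuousAt (fun w => r (w * (1 - t))) W :=
      ContinuousAt.comp (f := fun w : ℝ => w * (1 - t)) hrr (by fun_prop)
    unfold GGi
    have h2 : ContinuousAt (fun w => (1 - t) * Real.exp (-(l * (w * (1 - t)))) * n (w * t)) W := by
      refine Continuous.continuousAt ?_
      fun_prop
    exact continuousAt_const.mul (h2.mul hrr2)

lemma GG_meas (μ l : ℝ) (r n : ℝ → ℝ) (hr : Measurable r) (hn : Continuous n) :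
    Measurable (GG μ l r n) := by
  unfold GG
  simp only [intervalIntegral.integral_of_le zero_le_one]
  exact ((GGi_meas μ l r n hr hn).stronglyMeasurable.integral_prod_right' (ν := volume.restrict (Set.Ioc 0 1))).measurable

/-- primitive piece -/
noncomputable def PG (μ l : ℝ) (r n : ℝ → ℝ) (W : ℝ) : ℝ :=
  ∫ v in (0:ℝ)..W, Real.exp (l * v) * GG μ l r n (max v 0)

noncomputable def TT (μ l : ℝ) (r n : ℝ → ℝ) (w : ℝ) : ℝ :=
  Real.exp (-(l * max w 0)) + max w 0 * GG μ l r n (max w 0)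
   + μ * (Real.exp (-(l * max w 0)) * PG μ l r n (max w 0))

lemma PG_int (μ l M N : ℝ) (hμ : 0 < μ) (hl : 0 < l) (r n : ℝ → ℝ) (hr : Measurable r) (hn : Continuous n)
    (hM : ∀ v, |r v| ≤ M) (hN : ∀ v, |n v| ≤ N) (a b : ℝ) :
    IntervalIntegrable (fun v => Real.exp (l * v) * GG μ l r n (max v 0)) volume a b := by
  have h1 : IntervalIntegrable (fun v => Real.exp (l * v) * (M * N / μ)) volume a b :=
    Continuous.intervalIntegrable (by fun_prop) _ _
  refine h1.mono_fun' ?_ ?_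
  · have := GG_meas μ l r n hr hn
    exact Measurable.aestronglyMeasurable (by fun_prop)
  · refine Eventually.of_forall fun t => ?_
    simp only [norm_mul, Real.norm_eq_abs, Real.abs_exp]
    gcongr
    exact (GG_bound μ l M N hμ hl r n hM hN _ (le_max_right _ _)).1

lemma TT_cont (μ l M N : ℝ) (hμ : 0 < μ) (hl : 0 < l) (r n : ℝ → ℝ) (hr : Measurable r) (hn : Continuous n)
    (hrc : ContinuousOn r (Set.Ioi 0))
    (hM : ∀ v, |r v| ≤ M) (hN : ∀ v, |n v| ≤ N) : Continuous (TT μ l r n) := by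
  have hP : Continuous (PG μ l r n) :=
    intervalIntegral.continuous_primitive (fun a b => PG_int μ l M N hμ hl r n hr hn hM hN a b) 0
  have hG : Continuous (fun w => max w 0 * GG μ l r n (max w 0)) := by
    rw [continuous_iff_continuousAt]
    intro w
    rcases le_or_gt w 0 with h | h
    · unfold ContinuousAt
      beta_reduce
      rw [max_eq_right h, zero_mul]
      refine squeeze_zero_norm (a := fun w => max w 0 * (M * N / μ)) ?_ ?_
      · intro x
        rw [norm_mul, Real.norm_eq_abs, Real.norm_eq_abs, abs_of_nonneg (le_max_right x 0)]
        gcongr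
        exact (GG_bound μ l M N hμ hl r n hM hN _ (le_max_right _ _)).1
      · have : Continuous (fun w : ℝ => max w 0 * (M * N / μ)) := by fun_prop
        have := this.tendsto w
        simpa [max_eq_right h] using this
    · have h1 : ContinuousAt (GG μ l r n) (max w 0) := by
        rw [max_eq_left h.le]; exact GG_contAt μ l M N hμ hl r n hr hn hrc hM hN w h
      have h2 : ContinuousAt (fun w : ℝ => max w 0) w := Continuous.continuousAt (by fun_prop)
      exact h2.mul (ContinuousAt.comp (f := fun w : ℝ => max w 0) h1 h2)
  unfold TT
  have h3 : Continuous (fun w => PG μ l r n (max w 0)) := hP.comp (by fun_prop)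
  fun_prop

lemma integral_exp_mul_complex_aux {l W : ℝ} (hl : 0 < l) : ∫ v in (0:ℝ)..W, Real.exp (l * v) = (Real.exp (l * W) - 1) / l := by
  rw [intervalIntegral.integral_comp_mul_left (fun x => Real.exp x) hl.ne', integral_exp]
  simp; ring

lemma PG_bound (μ l M N : ℝ) (hμ : 0 < μ) (hl : 0 < l) (r n : ℝ → ℝ)
    (hM : ∀ v, |r v| ≤ M) (hN : ∀ v, |n v| ≤ N) (W : ℝ) (hW : 0 ≤ W) :
    |Real.exp (-(l * W)) * PG μ l r n W| ≤ M * N / μ / l := by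
  have hM0 : 0 ≤ M := (abs_nonneg _).trans (hM 0)
  have hN0 : 0 ≤ N := (abs_nonneg _).trans (hN 0)
  have := intervalIntegral.norm_integral_le_of_norm_le (μ := volume) (f := fun v => Real.exp (l * v) * GG μ l r n (max v 0))
      (g := fun v => Real.exp (l * v) * (M * N / μ)) hW
      (Eventually.of_forall fun t ht => by
        simp only [norm_mul, Real.norm_eq_abs, Real.abs_exp]
        gcongr
        exact (GG_bound μ l M N hμ hl r n hM hN _ (le_max_right _ _)).1)
      (Continuous.intervalIntegrable (by fun_prop) _ _)
  rw [intervalIntegral.integral_mul_const, integral_exp_mul_complex_aux hl] at this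
  rw [abs_mul, Real.abs_exp]
  have e : Real.exp (-(l * W)) * ((Real.exp (l * W) - 1) / l * (M * N / μ)) ≤ M * N / μ / l := by
    have : Real.exp (-(l * W)) * Real.exp (l * W) = 1 := by rw [← Real.exp_add]; simp
    have e2 : Real.exp (-(l * W)) * ((Real.exp (l * W) - 1) / l * (M * N / μ)) =
      (Real.exp (-(l * W)) * Real.exp (l * W) - Real.exp (-(l * W))) * (M * N / μ / l) := by ring
    rw [e2, this]
    have h3 := Real.exp_pos (-(l * W))
    have h4 : 0 ≤ M * N / μ / l := by positivity
    nlinarith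
  refine le_trans ?_ e
  gcongr
  exact this

lemma GG_sub (μ l M N : ℝ) (hμ : 0 < μ) (hl : 0 < l) (r n₁ n₂ : ℝ → ℝ) (hr : Measurable r)
    (hn₁ : Continuous n₁) (hn₂ : Continuous n₂)
    (hM : ∀ v, |r v| ≤ M) (hN₁ : ∀ v, |n₁ v| ≤ N) (hN₂ : ∀ v, |n₂ v| ≤ N) (W : ℝ) (hW : 0 ≤ W) :
    GG μ l r (fun v => n₁ v - n₂ v) W = GG μ l r n₁ W - GG μ l r n₂ W := by
  unfold GG
  rw [← intervalIntegral.integral_sub (GGi_int μ l M N hμ hl r n₁ hr hn₁ hM hN₁ W hW)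
    (GGi_int μ l M N hμ hl r n₂ hr hn₂ hM hN₂ W hW)]
  congr 1
  ext θ
  unfold GGi
  ring

lemma PG_sub (μ l M N : ℝ) (hμ : 0 < μ) (hl : 0 < l) (r n₁ n₂ : ℝ → ℝ) (hr : Measurable r)
    (hn₁ : Continuous n₁) (hn₂ : Continuous n₂)
    (hM : ∀ v, |r v| ≤ M) (hN₁ : ∀ v, |n₁ v| ≤ N) (hN₂ : ∀ v, |n₂ v| ≤ N) (W : ℝ) :
    PG μ l r (fun v => n₁ v - n₂ v) W = PG μ l r n₁ W - PG μ l r n₂ W := by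
  unfold PG
  rw [← intervalIntegral.integral_sub (PG_int μ l M N hμ hl r n₁ hr hn₁ hM hN₁ 0 W)
    (PG_int μ l M N hμ hl r n₂ hr hn₂ hM hN₂ 0 W)]
  congr 1
  ext v
  rw [GG_sub μ l M N hμ hl r n₁ n₂ hr hn₁ hn₂ hM hN₁ hN₂ _ (le_max_right _ _)]
  ring

lemma TT_fixed (μ M : ℝ) (hμ : 0 < μ) (r : ℝ → ℝ) (hr : Measurable r)
    (hrc : ContinuousOn r (Set.Ioi 0)) (hM : ∀ v, |r v| ≤ M) :
    ∃ l : ℝ, 0 < l ∧ ∃ n : ℝ → ℝ, ∃ N : ℝ, Continuous n ∧ (∀ v, |n v| ≤ N) ∧ ∀ w, TT μ l r n w = n w := by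
  have hM0 : 0 ≤ M := (abs_nonneg _).trans (hM 0)
  obtain ⟨l, hl, hl2⟩ : ∃ l : ℝ, 0 < l ∧ M / l / μ + μ * (M / μ / l) ≤ 1 / 2 := by
    refine ⟨2 * (M / μ + M) + 1, by positivity, ?_⟩
    have : M / (2 * (M / μ + M) + 1) / μ + μ * (M / μ / (2 * (M / μ + M) + 1)) =
      (M / μ + M) / (2 * (M / μ + M) + 1) := by field_simp
    rw [this, div_le_div_iff₀ (by positivity) (by norm_num)]
    linarith
  refine ⟨l, hl, ?_⟩
  have bd : ∀ n : ℝ →ᵇ ℝ, ∀ v, |n v| ≤ ‖n‖ := fun n v => n.norm_coe_le_norm v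
  have hTb : ∀ n : ℝ →ᵇ ℝ, ∀ w, ‖TT μ l r n w‖ ≤ 1 + M * ‖n‖ / l / μ + μ * (M * ‖n‖ / μ / l) := by
    intro n w
    unfold TT
    have hW : 0 ≤ max w 0 := le_max_right _ _
    have h1 := (GG_bound μ l M ‖n‖ hμ hl r n hM (bd n) _ hW).2
    have h2 := PG_bound μ l M ‖n‖ hμ hl r n hM (bd n) _ hW
    refine (norm_add_le _ _).trans (add_le_add ((norm_add_le _ _).trans (add_le_add ?_ h1)) ?_)
    · rw [Real.norm_eq_abs, Real.abs_exp]; simp; positivity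
    · rw [norm_mul, Real.norm_eq_abs, Real.norm_eq_abs, abs_of_pos hμ]
      gcongr
  let T : (ℝ →ᵇ ℝ) → (ℝ →ᵇ ℝ) := fun n => BoundedContinuousFunction.ofNormedAddCommGroup (TT μ l r n)
    (TT_cont μ l M ‖n‖ hμ hl r n hr n.continuous hrc hM (bd n)) _ (hTb n)
  have hT : ContractingWith (1 / 2) T := by
    refine ⟨by
      rw [← NNReal.coe_lt_coe]; norm_num, LipschitzWith.of_dist_le_mul fun n₁ n₂ => ?_⟩
    rw [BoundedContinuousFunction.dist_le (by positivity)]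
    intro w
    have hW : 0 ≤ max w 0 := le_max_right _ _
    set N := max ‖n₁‖ ‖n₂‖ with hN
    have b1 : ∀ v, |n₁ v| ≤ N := fun v => (bd n₁ v).trans (le_max_left _ _)
    have b2 : ∀ v, |n₂ v| ≤ N := fun v => (bd n₂ v).trans (le_max_right _ _)
    have b3 : ∀ v, |n₁ v - n₂ v| ≤ dist n₁ n₂ := fun v => by
      rw [← Real.dist_eq]; exact BoundedContinuousFunction.dist_coe_le_dist v
    have h1 := (GG_bound μ l M (dist n₁ n₂) hμ hl r (fun v => n₁ v - n₂ v) hM b3 _ hW).2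
    have h2 := PG_bound μ l M (dist n₁ n₂) hμ hl r (fun v => n₁ v - n₂ v) hM b3 _ hW
    have e : TT μ l r n₁ w - TT μ l r n₂ w = max w 0 * GG μ l r (fun v => n₁ v - n₂ v) (max w 0)
      + μ * (Real.exp (-(l * max w 0)) * PG μ l r (fun v => n₁ v - n₂ v) (max w 0)) := by
      rw [GG_sub μ l M N hμ hl r n₁ n₂ hr n₁.continuous n₂.continuous hM b1 b2 _ hW,
        PG_sub μ l M N hμ hl r n₁ n₂ hr n₁.continuous n₂.continuous hM b1 b2 _]
      unfold TT
      ring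
    change dist (TT μ l r n₁ w) (TT μ l r n₂ w) ≤ _
    rw [Real.dist_eq, e]
    refine (abs_add_le _ _).trans ?_
    rw [abs_mul μ, abs_of_pos hμ]
    have h3 : μ * |Real.exp (-(l * max w 0)) * PG μ l r (fun v => n₁ v - n₂ v) (max w 0)| ≤
      μ * (M * dist n₁ n₂ / μ / l) := by gcongr
    have h4 : M * dist n₁ n₂ / l / μ + μ * (M * dist n₁ n₂ / μ / l) =
      (M / l / μ + μ * (M / μ / l)) * dist n₁ n₂ := by ring
    have h5 := mul_le_mul_of_nonneg_right hl2 (dist_nonneg (x := n₁) (y := n₂))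
    push_cast
    linarith
  have hfix := hT.fixedPoint_isFixedPt
  refine ⟨hT.fixedPoint, ‖hT.fixedPoint‖, hT.fixedPoint.continuous, bd _, fun w => ?_⟩
  have := congrArg (fun f : ℝ →ᵇ ℝ => f w) hfix
  exact this

lemma volterra (μ M : ℝ) (hμ : 0 < μ) (q : ℝ → ℝ) (hq : ContinuousOn q (Set.Ioi 0))
    (hM : ∀ v, 0 < v → |q v - μ| ≤ M * v) :
    ∃ l C : ℝ, 0 < l ∧ ∃ m : ℝ → ℝ, Continuous m ∧ m 0 = 1 ∧ (∀ w, |m w| ≤ C * Real.exp (l * w)) ∧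
      ∀ w, 0 < w → w ^ μ * m w = ∫ v in (0:ℝ)..w, v ^ (μ - 1) * m v * q (w - v) := by
  have hM0 : 0 ≤ M := by have := (abs_nonneg _).trans (hM 1 one_pos); linarith
  set r : ℝ → ℝ := (Set.Ioi 0).piecewise (fun v => (q v - μ) / v) (fun _ => 0) with hrdef
  have hr1 : ∀ v, 0 < v → r v = (q v - μ) / v := fun v hv => by
    rw [hrdef]; exact Set.piecewise_eq_of_mem _ _ _ (Set.mem_Ioi.2 hv)
  have hr0 : ∀ v, v ≤ 0 → r v = 0 := fun v hv => by
    rw [hrdef, Set.piecewise_eq_of_notMem _ _ _ (by simpa using hv)]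
  have hc0 : ContinuousOn (fun v => (q v - μ) / v) (Set.Ioi 0) :=
    (hq.sub continuousOn_const).div continuousOn_id (fun x hx => ne_of_gt hx)
  have hrm : Measurable r := by
    classical
    have := ContinuousOn.measurable_piecewise hc0 (continuousOn_const (c := (0:ℝ)) (s := (Set.Ioi (0:ℝ))ᶜ)) measurableSet_Ioi
    convert this
  have hrc : ContinuousOn r (Set.Ioi 0) := hc0.congr (fun v hv => hr1 v hv)
  have hrM : ∀ v, |r v| ≤ M := by
    intro v
    rcases le_or_gt v 0 with h | h
    · rw [hr0 v h]; simpa using hM0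
    · rw [hr1 v h, abs_div, abs_of_pos h, div_le_iff₀ h]; exact hM v h
  obtain ⟨l, hl, n, N, hn, hN, hT⟩ := TT_fixed μ M hμ r hrm hrc hrM
  set g : ℝ → ℝ := fun v => Real.exp (l * v) * GG μ l r n (max v 0) with hg
  set m : ℝ → ℝ := fun w => Real.exp (l * w) * n w with hm
  have hmc : Continuous m := by fun_prop
  have hgint : ∀ a b, IntervalIntegrable g volume a b := fun a b => PG_int μ l M N hμ hl r n hrm hn hrM hN a b
  have m_eq : ∀ w, 0 ≤ w → m w = 1 + w * g w + μ * ∫ v in (0:ℝ)..w, g v := by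
    intro w hw
    simp only [hm, hg]
    rw [← hT w]
    unfold TT PG
    simp only [max_eq_left hw]
    have : Real.exp (l * w) * Real.exp (-(l * w)) = 1 := by rw [← Real.exp_add]; simp
    linear_combination (1 + μ * ∫ v in (0:ℝ)..w, Real.exp (l * v) * GG μ l r n (max v 0)) * this
  have g_eq : ∀ w, 0 < w → w ^ μ * (w * g w) = ∫ v in (0:ℝ)..w, v ^ (μ - 1) * m v * ((w - v) * r (w - v)) := by
    intro w hw
    have h1 := intervalIntegral.integral_comp_mul_left (a := 0) (b := 1)
      (fun v => v ^ (μ - 1) * m v * ((w - v) * r (w - v))) hw.ne'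
    simp only [mul_zero, mul_one, smul_eq_mul] at h1
    have h2 : ∫ x in (0:ℝ)..1, (w * x) ^ (μ - 1) * m (w * x) * ((w - w * x) * r (w - w * x)) =
        w ^ μ * g w := by
      simp only [hg, max_eq_left hw.le, GG]
      rw [← mul_assoc, ← intervalIntegral.integral_const_mul]
      refine intervalIntegral.integral_congr_ae (Eventually.of_forall fun x hx => ?_)
      rw [Set.uIoc_of_le zero_le_one] at hx
      simp only [hm, GGi]
      rw [Real.mul_rpow hw.le hx.1.le, show w - w * x = w * (1 - x) by ring,
        show μ = (μ - 1) + 1 by ring, Real.rpow_add_one hw.ne', show μ - 1 + 1 - 1 = μ - 1 by ring,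
        show l * (w * x) = l * w + -(l * (w * (1 - x))) by ring, Real.exp_add]
      ring
    rw [h2] at h1
    have : w * w⁻¹ = 1 := mul_inv_cancel₀ hw.ne'
    linear_combination w * h1 + (∫ v in (0:ℝ)..w, v ^ (μ - 1) * m v * ((w - v) * r (w - v))) * this
  have hvm : ∀ w : ℝ, IntervalIntegrable (fun v => v ^ (μ - 1) * m v) volume 0 w := fun w =>
    (intervalIntegral.intervalIntegrable_rpow' (by linarith)).mul_continuousOn hmc.continuousOn
  have p_eq : ∀ w, 0 < w → ∫ v in (0:ℝ)..w, μ * (v ^ (μ - 1) * m v) = w ^ μ * (1 + μ * ∫ v in (0:ℝ)..w, g v) := by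
    intro w hw
    have hprim : Continuous (fun w => ∫ v in (0:ℝ)..w, g v) := intervalIntegral.continuous_primitive hgint 0
    have := intervalIntegral.integral_eq_sub_of_hasDerivAt_of_le (a := 0) (b := w)
      (f := fun w => w ^ μ * (1 + μ * ∫ v in (0:ℝ)..w, g v)) (f' := fun v => μ * (v ^ (μ - 1) * m v)) hw.le
      (by
        refine Continuous.continuousOn ?_
        have := Real.continuous_rpow_const hμ.le
        fun_prop)
      (by
        intro x hx
        have hgc : ContinuousAt g x := by
          have h1 : ContinuousAt (GG μ l r n) (max x 0) := by
            rw [max_eq_left hx.1.le]; exact GG_contAt μ l M N hμ hl r n hrm hn hrc hrM hN x hx.1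
          have h2 : ContinuousAt (fun w : ℝ => max w 0) x := Continuous.continuousAt (by fun_prop)
          have h3 : ContinuousAt (fun w : ℝ => Real.exp (l * w)) x := Continuous.continuousAt (by fun_prop)
          exact h3.mul (ContinuousAt.comp (f := fun w : ℝ => max w 0) h1 h2)
        have hgm : StronglyMeasurable g := by
          have := GG_meas μ l r n hrm hn
          exact Measurable.stronglyMeasurable (by fun_prop)
        have d1 := intervalIntegral.integral_hasDerivAt_right (hgint 0 x)
          hgm.stronglyMeasurableAtFilter hgc
        have d2 := (Real.hasDerivAt_rpow_const (x := x) (p := μ) (Or.inl hx.1.ne')).mul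
          ((d1.const_mul μ).const_add 1)
        convert! d2 using 1
        rw [m_eq x hx.1.le]
        have : x ^ μ = x ^ (μ - 1) * x := by
          rw [← Real.rpow_add_one hx.1.ne']; ring_nf
        rw [this]; ring)
      ((hvm w).const_mul μ)
    rw [this]
    simp [Real.zero_rpow hμ.ne']
  refine ⟨l, N, hl, m, hmc, ?_, ?_, ?_⟩
  · rw [m_eq 0 le_rfl]; simp
  · intro w
    simp only [hm, abs_mul, Real.abs_exp]
    rw [mul_comm]
    gcongr
    exact hN w
  · intro w hw
    have e : ∫ v in (0:ℝ)..w, v ^ (μ - 1) * m v * q (w - v) =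
      ∫ v in (0:ℝ)..w, (μ * (v ^ (μ - 1) * m v) + v ^ (μ - 1) * m v * ((w - v) * r (w - v))) := by
      have : ∀ᵐ t : ℝ, t ≠ w := by simp [ae_iff]
      refine intervalIntegral.integral_congr_ae ?_
      filter_upwards [this] with t htw ht
      rw [Set.uIoc_of_le hw.le] at ht
      have h1 : 0 < w - t := by have := lt_of_le_of_ne ht.2 htw; linarith
      rw [hr1 _ h1, mul_div_cancel₀ _ h1.ne']
      ring
    have hI : IntervalIntegrable (fun v => v ^ (μ - 1) * m v * ((w - v) * r (w - v))) volume 0 w := by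
      have h0 : IntervalIntegrable (fun v => |v ^ (μ - 1) * m v| * (w * M)) volume 0 w :=
        (hvm w).abs.mul_const _
      refine h0.mono_fun' ?_ ?_
      · have := hmc.measurable
        exact Measurable.aestronglyMeasurable (by fun_prop)
      · rw [Set.uIoc_of_le hw.le]
        refine (ae_restrict_iff' measurableSet_Ioc).2 (Eventually.of_forall fun t ht => ?_)
        beta_reduce
        rw [norm_mul, Real.norm_eq_abs, Real.norm_eq_abs]
        gcongr
        rw [abs_mul]
        have : |w - t| ≤ w := by rw [abs_le]; constructor <;> linarith [ht.1, ht.2]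
        exact mul_le_mul this (hrM _) (abs_nonneg _) hw.le
    rw [e, intervalIntegral.integral_add ((hvm w).const_mul μ) hI, p_eq w hw, ← g_eq w hw, m_eq w hw.le]
    ring

lemma lap_int_aux (μ l C σ : ℝ) (hμ : 0 < μ) (hσ : l < σ) :
    IntegrableOn (fun w : ℝ => C * (w ^ (μ - 1) * Real.exp (-((σ - l) * w)))) (Set.Ioi 0) := by
  have := integrableOn_rpow_mul_exp_neg_mul_rpow (p := 1) (s := μ - 1) (b := σ - l) (by linarith) one_pos (by linarith)
  refine Integrable.const_mul ?_ C
  refine this.congr_fun ?_ measurableSet_Ioi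
  intro x hx
  simp only [Real.rpow_one, neg_mul]

lemma lap_int (μ l C : ℝ) (hμ : 0 < μ) (k : ℝ → ℝ) (hk : AEStronglyMeasurable k (volume.restrict (Set.Ioi 0)))
    (hb : ∀ w, 0 < w → |k w| ≤ C * (w ^ (μ - 1) * Real.exp (l * w))) (s : ℂ) (hs : l < s.re) :
    IntegrableOn (fun w : ℝ => (k w : ℂ) * Complex.exp (-(s * w))) (Set.Ioi 0) := by
  refine Integrable.mono' (lap_int_aux μ l C s.re hμ hs) ?_ ?_
  · exact (Complex.continuous_ofReal.comp_aestronglyMeasurable hk).mul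
      (Continuous.aestronglyMeasurable (by fun_prop))
  · refine (ae_restrict_iff' measurableSet_Ioi).2 (Eventually.of_forall fun t ht => ?_)
    rw [norm_mul, Complex.norm_real, Complex.norm_exp]
    have e : (-(s * (t:ℂ))).re = - (s.re * t) := by simp
    rw [e, show -((s.re - l) * t) = l * t + -(s.re * t) by ring, Real.exp_add, ← mul_assoc, ← mul_assoc]
    gcongr
    have := hb t ht
    rwa [← mul_assoc] at this

lemma lap_deriv (μ l C : ℝ) (hμ : 0 < μ) (k : ℝ → ℝ) (hk : AEStronglyMeasurable k (volume.restrict (Set.Ioi 0)))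
    (hb : ∀ w, 0 < w → |k w| ≤ C * (w ^ (μ - 1) * Real.exp (l * w))) (s : ℂ) (hs : l < s.re) :
    HasDerivAt (fun s : ℂ => ∫ w in Set.Ioi (0:ℝ), (k w : ℂ) * Complex.exp (-(s * w)))
      (∫ w in Set.Ioi (0:ℝ), -(((w * k w : ℝ) : ℂ) * Complex.exp (-(s * w)))) s := by
  set δ := (s.re - l) / 2 with hδ
  have hδ0 : 0 < δ := by rw [hδ]; linarith
  have hC : 0 ≤ C := by
    have h1 := (abs_nonneg _).trans (hb 1 one_pos)
    have : 0 < (1:ℝ) ^ (μ - 1) * Real.exp (l * 1) := by positivity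
    by_contra h
    push Not at h
    nlinarith
  refine (hasDerivAt_integral_of_dominated_loc_of_deriv_le (μ := volume.restrict (Set.Ioi 0))
    (F := fun s w => (k w : ℂ) * Complex.exp (-(s * w)))
    (F' := fun s w => -(((w * k w : ℝ) : ℂ) * Complex.exp (-(s * w)))) (x₀ := s) (s := Metric.ball s δ)
    (bound := fun w : ℝ => C * (w ^ (μ + 1 - 1) * Real.exp (-((s.re - δ - l) * w))))
    (Metric.ball_mem_nhds _ hδ0) ?_ ?_ ?_ ?_ ?_ ?_).2
  · exact Eventually.of_forall fun s => (Complex.continuous_ofReal.comp_aestronglyMeasurable hk).mul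
      (Continuous.aestronglyMeasurable (by fun_prop))
  · exact lap_int μ l C hμ k hk hb s hs
  · have : AEStronglyMeasurable (fun w : ℝ => w * k w) (volume.restrict (Set.Ioi 0)) :=
      (Continuous.aestronglyMeasurable continuous_id).mul hk
    exact ((Complex.continuous_ofReal.comp_aestronglyMeasurable this).mul
      (Continuous.aestronglyMeasurable (by fun_prop))).neg
  · refine (ae_restrict_iff' measurableSet_Ioi).2 (Eventually.of_forall fun t ht z hz => ?_)
    have ht : 0 < t := ht
    rw [norm_neg, norm_mul, Complex.norm_real, Complex.norm_exp]
    have e : (-(z * (t:ℂ))).re = - (z.re * t) := by simp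
    have hz2 : s.re - δ ≤ z.re := by
      have h1 : |(z - s).re| ≤ ‖z - s‖ := Complex.abs_re_le_norm _
      rw [Metric.mem_ball, dist_eq_norm] at hz
      rw [Complex.sub_re, abs_le] at h1
      linarith [h1.1]
    rw [e, norm_mul, Real.norm_eq_abs, Real.norm_eq_abs, abs_of_pos ht]
    have h1 := hb t ht
    have h2 : Real.exp (-(z.re * t)) ≤ Real.exp (-((s.re - δ) * t)) := by
      apply Real.exp_le_exp.2; nlinarith
    calc t * |k t| * Real.exp (-(z.re * t)) ≤ t * (C * (t ^ (μ - 1) * Real.exp (l * t))) * Real.exp (-((s.re - δ) * t)) := by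
          gcongr
      _ = C * (t ^ (μ + 1 - 1) * Real.exp (-((s.re - δ - l) * t))) := by
          rw [show μ + 1 - 1 = (μ - 1) + 1 by ring, Real.rpow_add_one ht.ne',
            show -((s.re - δ - l) * t) = l * t + -((s.re - δ) * t) by ring, Real.exp_add]
          ring
  · exact lap_int_aux (μ + 1) l C (s.re - δ) (by linarith) (by rw [hδ]; linarith)
  · refine Eventually.of_forall fun t z hz => ?_
    have h1 : HasDerivAt (fun z : ℂ => -(z * (t:ℂ))) (-(1 * (t:ℂ))) z := ((hasDerivAt_id z).mul_const _).neg
    have h2 := (h1.cexp).const_mul (k t : ℂ)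
    convert! h2 using 1
    push_cast; ring

lemma lap_conv (μ l C Mq σ : ℝ) (hμ : 0 < μ) (hl : 0 < l) (hσ : l < σ) (m q : ℝ → ℝ) (hm : Continuous m)
    (hb : ∀ w, |m w| ≤ C * Real.exp (l * w))
    (hq : ContinuousOn q (Set.Ioi 0)) (hqb : ∀ v, 0 < v → |q v| ≤ Mq)
    (hv : ∀ w, 0 < w → w ^ μ * m w = ∫ v in (0:ℝ)..w, v ^ (μ - 1) * m v * q (w - v)) :
    (∫ w in Set.Ioi (0:ℝ), (w * (w ^ (μ - 1) * m w)) * Real.exp (-(σ * w))) =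
    (∫ w in Set.Ioi (0:ℝ), (w ^ (μ - 1) * m w) * Real.exp (-(σ * w))) *
     (∫ w in Set.Ioi (0:ℝ), Real.exp (-(w * σ)) * q w) := by
  have hf : IntegrableOn (fun w : ℝ => (w ^ (μ - 1) * m w) * Real.exp (-(σ * w))) (Set.Ioi 0) := by
    refine Integrable.mono' (lap_int_aux μ l C σ hμ hσ) ?_ ?_
    · have := hm.measurable
      exact Measurable.aestronglyMeasurable (by fun_prop)
    · refine (ae_restrict_iff' measurableSet_Ioi).2 (Eventually.of_forall fun t ht => ?_)
      have ht : 0 < t := ht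
      rw [norm_mul, norm_mul, Real.norm_eq_abs, Real.norm_eq_abs, Real.norm_eq_abs, Real.abs_exp,
        abs_of_pos (Real.rpow_pos_of_pos ht _)]
      rw [show -((σ - l) * t) = l * t + -(σ * t) by ring, Real.exp_add]
      calc _ ≤ t ^ (μ - 1) * (C * Real.exp (l * t)) * Real.exp (-(σ * t)) := by
            gcongr; exact hb t
        _ = _ := by ring
  have hg : IntegrableOn (fun w : ℝ => Real.exp (-(w * σ)) * q w) (Set.Ioi 0) := by
    have h1 : IntegrableOn (fun t => Mq * Real.exp (-σ * t)) (Set.Ioi 0) :=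
      (exp_neg_integrableOn_Ioi 0 (by linarith)).const_mul Mq
    refine Integrable.mono' h1 ?_ ?_
    · exact (ContinuousOn.mul (by fun_prop) hq).aestronglyMeasurable measurableSet_Ioi
    · refine (ae_restrict_iff' measurableSet_Ioi).2 (Eventually.of_forall fun t ht => ?_)
      rw [norm_mul, Real.norm_eq_abs, Real.norm_eq_abs, Real.abs_exp, mul_comm Mq,
        show -(t * σ) = -σ * t by ring]
      gcongr
      exact hqb t ht
  have := integral_posConvolution hf hg (ContinuousLinearMap.mul ℝ ℝ)
  simp only [ContinuousLinearMap.mul_apply'] at this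
  rw [← this]
  refine setIntegral_congr_fun measurableSet_Ioi ?_
  intro w hw
  have hw : 0 < w := hw
  beta_reduce
  have e1 : w * (w ^ (μ - 1) * m w) = w ^ μ * m w := by
    rw [← mul_assoc, mul_comm w, ← Real.rpow_add_one hw.ne']; ring_nf
  rw [e1, hv w hw, ← intervalIntegral.integral_mul_const]
  congr 1
  ext v
  rw [show -(σ * w) = -(σ * v) + -((w - v) * σ) by ring, Real.exp_add]
  ring

lemma lap_deriv_real (μ l C : ℝ) (hμ : 0 < μ) (k : ℝ → ℝ) (hk : AEStronglyMeasurable k (volume.restrict (Set.Ioi 0)))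
    (hb : ∀ w, 0 < w → |k w| ≤ C * (w ^ (μ - 1) * Real.exp (l * w))) (σ : ℝ) (hs : l < σ) :
    HasDerivAt (fun σ : ℝ => ∫ w in Set.Ioi (0:ℝ), k w * Real.exp (-(σ * w)))
      (-∫ w in Set.Ioi (0:ℝ), (w * k w) * Real.exp (-(σ * w))) σ := by
  have h := (lap_deriv μ l C hμ k hk hb (σ : ℂ) (by simpa using hs)).real_of_complex
  have e1 : ∀ σ : ℝ, (∫ w in Set.Ioi (0:ℝ), (k w : ℂ) * Complex.exp (-((σ:ℂ) * w))) =
      ((∫ w in Set.Ioi (0:ℝ), k w * Real.exp (-(σ * w)) : ℝ) : ℂ) := by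
    intro σ
    rw [← integral_complex_ofReal]
    congr 1; ext w; push_cast; rfl
  have e2 : (∫ w in Set.Ioi (0:ℝ), -(((w * k w : ℝ) : ℂ) * Complex.exp (-((σ:ℂ) * w)))) =
      ((-∫ w in Set.Ioi (0:ℝ), (w * k w) * Real.exp (-(σ * w)) : ℝ) : ℂ) := by
    rw [integral_neg, Complex.ofReal_neg, ← integral_complex_ofReal]
    congr 2; ext w; push_cast; rfl
  simp only [e1] at h
  rw [e2] at h
  simpa only [Complex.ofReal_re] using h

noncomputable def qq {p q : ℕ} (A a : Fin p → ℝ) (B b : Fin q → ℝ) (v : ℝ) : ℝ :=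
  ∑ j, JJ (b j) (v / B j) - ∑ i, JJ (a i) (v / A i)

noncomputable def phi {p q : ℕ} (A a : Fin p → ℝ) (B b : Fin q → ℝ) (s : ℂ) : ℂ :=
  (∏ k, Complex.Gamma ((A k : ℂ) * s + (a k : ℂ))) / (∏ j, Complex.Gamma ((B j : ℂ) * s + (b j : ℂ)))

lemma JJ_scale_cont (A a : ℝ) (hA : 0 < A) : ContinuousOn (fun v => JJ a (v / A)) (Set.Ioi 0) := by
  refine (JJ_cont a).comp (by fun_prop) ?_
  intro x hx
  have hx : 0 < x := hx
  exact Set.mem_Ioi.2 (by positivity)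

lemma JJ_scale_bound (A a : ℝ) (hA : 0 < A) (ha : 0 ≤ a) : ∃ M, 0 < M ∧ ∀ v, 0 < v → |JJ a (v / A)| ≤ M ∧
    |JJ a (v / A) - (a - 1/2)| ≤ M * v := by
  obtain ⟨M, hM, h⟩ := JJ_bound a ha
  refine ⟨M + M / A, by positivity, fun v hv => ?_⟩
  obtain ⟨h1, h2⟩ := h (v / A) (by positivity)
  have : 0 < M / A := by positivity
  refine ⟨by linarith, h2.trans ?_⟩
  have : M * (v / A) = M / A * v := by ring
  rw [this]
  gcongr; linarith

lemma JJsum_bound {p : ℕ} (A a : Fin p → ℝ) (hA : ∀ i, 0 < A i) (ha : ∀ i, 0 ≤ a i) :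
    ∃ M, 0 ≤ M ∧ ∀ v, 0 < v → |∑ i, JJ (a i) (v / A i)| ≤ M ∧
      |∑ i, JJ (a i) (v / A i) - (∑ i, a i - p / 2)| ≤ M * v := by
  choose M hM0 hM using fun i => JJ_scale_bound (A i) (a i) (hA i) (ha i)
  refine ⟨∑ i, M i, Finset.sum_nonneg fun i _ => (hM0 i).le, fun v hv => ⟨?_, ?_⟩⟩
  · exact (Finset.abs_sum_le_sum_abs _ _).trans (Finset.sum_le_sum fun i _ => (hM i v hv).1)
  · have : ∑ i, JJ (a i) (v / A i) - (∑ i, a i - p / 2) = ∑ i, (JJ (a i) (v / A i) - (a i - 1/2)) := by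
      simp only [Finset.sum_sub_distrib]
      simp; ring
    rw [this, Finset.sum_mul]
    exact (Finset.abs_sum_le_sum_abs _ _).trans (Finset.sum_le_sum fun i _ => (hM i v hv).2)

lemma qq_cont {p q : ℕ} (A a : Fin p → ℝ) (B b : Fin q → ℝ) (hA : ∀ k, 0 < A k) (hB : ∀ j, 0 < B j) :
    ContinuousOn (qq A a B b) (Set.Ioi 0) := by
  unfold qq
  exact (continuousOn_finsetSum _ fun j _ => JJ_scale_cont _ _ (hB j)).sub
    (continuousOn_finsetSum _ fun j _ => JJ_scale_cont _ _ (hA j))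

lemma qq_bound {p q : ℕ} (A a : Fin p → ℝ) (B b : Fin q → ℝ) (hA : ∀ k, 0 < A k) (hB : ∀ j, 0 < B j)
    (ha : ∀ k, 0 ≤ a k) (hb : ∀ j, 0 ≤ b j) :
    ∃ M, ∀ v, 0 < v → |qq A a B b v| ≤ M ∧
      |qq A a B b v - ((∑ j, b j) - (∑ k, a k) + ((p : ℝ) - (q : ℝ)) / 2)| ≤ M * v := by
  obtain ⟨M1, h10, h1⟩ := JJsum_bound A a hA ha
  obtain ⟨M2, h20, h2⟩ := JJsum_bound B b hB hb
  refine ⟨M2 + M1, fun v hv => ⟨(abs_sub _ _).trans (add_le_add (h2 v hv).1 (h1 v hv).1), ?_⟩⟩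
  have : qq A a B b v - ((∑ j, b j) - (∑ k, a k) + ((p : ℝ) - (q : ℝ)) / 2) =
    (∑ i, JJ (b i) (v / B i) - (∑ i, b i - q / 2)) - (∑ i, JJ (a i) (v / A i) - (∑ i, a i - p / 2)) := by
    unfold qq; ring
  rw [this, add_mul]
  exact (abs_sub _ _).trans (add_le_add (h2 v hv).2 (h1 v hv).2)

lemma JJ_term (A a σ : ℝ) (hA : 0 < A) (ha : 0 ≤ a) (hσ : 0 < σ) :
    HasDerivAt (fun x => Real.log (Real.Gamma (A * x + a)))
      (A * Real.log A + A * Real.log σ + ∫ w in Set.Ioi (0:ℝ), Real.exp (-(w * σ)) * JJ a (w / A)) σ := by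
  have h1 := logGamma_deriv a (A * σ) ha (by positivity)
  have h2 : HasDerivAt (fun x => A * x + a) A σ := by
    simpa using ((hasDerivAt_id σ).const_mul A).add_const a
  have h3 := HasDerivAt.comp σ h1 h2
  convert! h3 using 1
  have h4 := integral_comp_mul_left_Ioi (fun w => Real.exp (-(w * σ)) * JJ a (w / A)) 0 hA
  rw [mul_zero] at h4
  have h5 : (∫ t in Set.Ioi (0:ℝ), Real.exp (-(t * (A * σ))) * JJ a t) =
     ∫ (x : ℝ) in Set.Ioi 0, (fun w ↦ Real.exp (-(w * σ)) * JJ a (w / A)) (A * x) := by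
    congr 1; ext x
    beta_reduce
    rw [mul_div_cancel_left₀ _ hA.ne']; congr 3; ring
  rw [h5, h4, Real.log_mul hA.ne' hσ.ne', smul_eq_mul, add_mul, mul_comm A⁻¹, mul_assoc, inv_mul_cancel₀ hA.ne']
  ring

lemma JJsum_term {p : ℕ} (A a : Fin p → ℝ) (σ : ℝ) (hA : ∀ k, 0 < A k) (ha : ∀ k, 0 ≤ a k) (hσ : 0 < σ) :
    HasDerivAt (fun x => ∑ i, Real.log (Real.Gamma (A i * x + a i)))
      (∑ i, A i * Real.log (A i) + (∑ i, A i) * Real.log σ +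
        ∫ w in Set.Ioi (0:ℝ), Real.exp (-(w * σ)) * ∑ i, JJ (a i) (w / A i)) σ := by
  have h := HasDerivAt.fun_sum (u := Finset.univ) fun i _ => JJ_term (A i) (a i) σ (hA i) (ha i) hσ
  convert! h using 1
  rw [Finset.sum_add_distrib, Finset.sum_add_distrib, Finset.sum_mul]
  congr 1
  simp only [Finset.mul_sum]
  rw [integral_finset_sum]
  intro i _
  obtain ⟨M, _, hM⟩ := JJ_scale_bound (A i) (a i) (hA i) (ha i)
  exact exp_mul_bdd_integrable σ M hσ _ (JJ_scale_cont _ _ (hA i)) fun t ht => (hM t ht).1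

lemma logPhi_deriv {p q : ℕ} (A a : Fin p → ℝ) (B b : Fin q → ℝ) (hA : ∀ k, 0 < A k) (hB : ∀ j, 0 < B j)
    (ha : ∀ k, 0 ≤ a k) (hb : ∀ j, 0 ≤ b j) (hsum : ∑ i, A i = ∑ j, B j) (L : ℝ)
    (hL : L = ∑ i, A i * Real.log (A i) - ∑ j, B j * Real.log (B j)) (σ : ℝ) (hσ : 0 < σ) :
    HasDerivAt (fun x => ∑ i, Real.log (Real.Gamma (A i * x + a i)) - ∑ j, Real.log (Real.Gamma (B j * x + b j)) - x * L)
      (-∫ w in Set.Ioi (0:ℝ), Real.exp (-(w * σ)) * qq A a B b w) σ := by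
  have h := ((JJsum_term A a σ hA ha hσ).sub (JJsum_term B b σ hB hb hσ)).sub ((hasDerivAt_id σ).mul_const L)
  convert! h using 1
  obtain ⟨M1, h10, h1⟩ := JJsum_bound A a hA ha
  obtain ⟨M2, h20, h2⟩ := JJsum_bound B b hB hb
  have e : ∀ w, Real.exp (-(w * σ)) * qq A a B b w = Real.exp (-(w * σ)) * ∑ j, JJ (b j) (w / B j) -
     Real.exp (-(w * σ)) * ∑ j, JJ (a j) (w / A j) := fun w => by unfold qq; ring
  simp only [e]
  rw [integral_sub]
  · rw [hsum, hL]; ring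
  · exact exp_mul_bdd_integrable σ M2 hσ _ (continuousOn_finsetSum _ fun j _ => JJ_scale_cont _ _ (hB j)) fun t ht => (h2 t ht).1
  · exact exp_mul_bdd_integrable σ M1 hσ _ (continuousOn_finsetSum _ fun j _ => JJ_scale_cont _ _ (hA j)) fun t ht => (h1 t ht).1

lemma phi_ofReal {p q : ℕ} (A a : Fin p → ℝ) (B b : Fin q → ℝ) (hA : ∀ k, 0 < A k) (hB : ∀ j, 0 < B j)
    (ha : ∀ k, 0 ≤ a k) (hb : ∀ j, 0 ≤ b j) (L σ : ℝ) (hσ : 0 < σ) :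
    phi A a B b (σ : ℂ) * Complex.exp (-((σ:ℂ) * L)) = ((Real.exp (∑ i, Real.log (Real.Gamma (A i * σ + a i)) -
      ∑ j, Real.log (Real.Gamma (B j * σ + b j)) - σ * L) : ℝ) : ℂ) := by
  have hg : ∀ A a : ℝ, 0 < A → 0 ≤ a → 0 < Real.Gamma (A * σ + a) := fun A a hA ha => Real.Gamma_pos_of_pos (by positivity)
  rw [sub_eq_add_neg, Real.exp_add, Real.exp_sub, Real.exp_sum, Real.exp_sum]
  simp only [Real.exp_log (hg _ _ (hA _) (ha _)), Real.exp_log (hg _ _ (hB _) (hb _))]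
  unfold phi
  push_cast
  simp only [← Complex.Gamma_ofReal]
  push_cast
  rfl

lemma K_real {p q : ℕ} (A a : Fin p → ℝ) (B b : Fin q → ℝ) (hA : ∀ k, 0 < A k) (hB : ∀ j, 0 < B j)
    (ha : ∀ k, 0 ≤ a k) (hb : ∀ j, 0 ≤ b j) (hsum : ∑ i, A i = ∑ j, B j) (L : ℝ)
    (hL : L = ∑ i, A i * Real.log (A i) - ∑ j, B j * Real.log (B j))
    (μ l C : ℝ) (hμ : 0 < μ) (hl : 0 < l) (m : ℝ → ℝ) (hm : Continuous m)
    (hmb : ∀ w, |m w| ≤ C * Real.exp (l * w))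
    (hv : ∀ w, 0 < w → w ^ μ * m w = ∫ v in (0:ℝ)..w, v ^ (μ - 1) * m v * qq A a B b (w - v)) :
    ∃ κ : ℝ, ∀ σ, l < σ → (∫ w in Set.Ioi (0:ℝ), (w ^ (μ - 1) * m w) * Real.exp (-(σ * w))) =
      κ * Real.exp (∑ i, Real.log (Real.Gamma (A i * σ + a i)) -
      ∑ j, Real.log (Real.Gamma (B j * σ + b j)) - σ * L) := by
  obtain ⟨M, hM⟩ := qq_bound A a B b hA hB ha hb
  set F := fun σ : ℝ => ∑ i, Real.log (Real.Gamma (A i * σ + a i)) -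
      ∑ j, Real.log (Real.Gamma (B j * σ + b j)) - σ * L with hF
  set G := fun σ : ℝ => (∫ w in Set.Ioi (0:ℝ), (w ^ (μ - 1) * m w) * Real.exp (-(σ * w))) with hG
  have hd : ∀ σ, l < σ → HasDerivAt (fun σ => G σ * Real.exp (-F σ)) 0 σ := by
    intro σ hσ
    have h1 := logPhi_deriv A a B b hA hB ha hb hsum L hL σ (hl.trans hσ)
    have h2 := lap_deriv_real μ l C hμ (fun w => w ^ (μ - 1) * m w)
      (by have := hm.measurable; exact Measurable.aestronglyMeasurable (by fun_prop))
      (by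
        intro w hw
        rw [abs_mul, abs_of_pos (Real.rpow_pos_of_pos hw _)]
        calc _ ≤ w ^ (μ - 1) * (C * Real.exp (l * w)) := by gcongr; exact hmb w
          _ = _ := by ring) σ hσ
    have h3 := lap_conv μ l C M σ hμ hl hσ m _ hm hmb (qq_cont A a B b hA hB) (fun v hv => (hM v hv).1) hv
    rw [h3] at h2
    have h4 := h2.mul h1.neg.exp
    convert! h4 using 1
    ring
  obtain ⟨κ, hκ⟩ := isOpen_Ioi.exists_is_const_of_deriv_eq_zero (s := Set.Ioi l) (f := fun σ => G σ * Real.exp (-F σ))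
    isPreconnected_Ioi (fun σ hσ => (hd σ hσ).differentiableAt.differentiableWithinAt) (fun σ hσ => (hd σ hσ).deriv)
  refine ⟨κ, fun σ hσ => ?_⟩
  have := hκ σ hσ
  rw [← this, mul_assoc, ← Real.exp_add, neg_add_cancel, Real.exp_zero, mul_one]

lemma K_complex {p q : ℕ} (A a : Fin p → ℝ) (B b : Fin q → ℝ) (hA : ∀ k, 0 < A k) (hB : ∀ j, 0 < B j)
    (ha : ∀ k, 0 ≤ a k) (hb : ∀ j, 0 ≤ b j) (hsum : ∑ i, A i = ∑ j, B j) (L : ℝ)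
    (hL : L = ∑ i, A i * Real.log (A i) - ∑ j, B j * Real.log (B j))
    (μ l C : ℝ) (hμ : 0 < μ) (hl : 0 < l) (m : ℝ → ℝ) (hm : Continuous m)
    (hmb : ∀ w, |m w| ≤ C * Real.exp (l * w))
    (hv : ∀ w, 0 < w → w ^ μ * m w = ∫ v in (0:ℝ)..w, v ^ (μ - 1) * m v * qq A a B b (w - v)) :
    ∃ κ : ℝ, ∀ s : ℂ, l < s.re → (∫ w in Set.Ioi (0:ℝ), ((w ^ (μ - 1) * m w : ℝ) : ℂ) * Complex.exp (-(s * w))) =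
      κ * (phi A a B b s * Complex.exp (-(s * L))) := by
  obtain ⟨κ, hκ⟩ := K_real A a B b hA hB ha hb hsum L hL μ l C hμ hl m hm hmb hv
  refine ⟨κ, ?_⟩
  have hU : IsOpen {s : ℂ | l < s.re} := isOpen_lt continuous_const Complex.continuous_re
  have hU2 : IsPreconnected {s : ℂ | l < s.re} := (convex_halfSpace_re_gt l).isPreconnected
  have hGd : ∀ A a : ℝ, 0 < A → 0 ≤ a → ∀ s : ℂ, l < s.re → 0 < ((A:ℂ) * s + a).re := by
    intro A a hA ha s hs
    have : 0 < s.re := hl.trans hs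
    simp
    positivity
  have hGdiff : ∀ s : ℂ, 0 < s.re → DifferentiableAt ℂ Complex.Gamma s ∧ Complex.Gamma s ≠ 0 := by
    intro s hs
    refine ⟨Complex.differentiableAt_Gamma _ ?_, Complex.Gamma_ne_zero_of_re_pos hs⟩
    intro n h
    rw [h] at hs
    simp at hs
    linarith [(Nat.cast_nonneg n : (0:ℝ) ≤ n)]
  have h := AnalyticOnNhd.eqOn_of_preconnected_of_frequently_eq (𝕜 := ℂ) (U := {s : ℂ | l < s.re}) (z₀ := ((l + 1 : ℝ) : ℂ))
    (f := fun s => ∫ w in Set.Ioi (0:ℝ), ((w ^ (μ - 1) * m w : ℝ) : ℂ) * Complex.exp (-(s * w)))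
    (g := fun s => κ * (phi A a B b s * Complex.exp (-(s * L)))) ?_ ?_ hU2 (by simp) ?_
  · exact h
  · refine DifferentiableOn.analyticOnNhd (fun s hs => ?_) hU
    refine (lap_deriv μ l C hμ (fun w => w ^ (μ - 1) * m w)
      (by have := hm.measurable; exact Measurable.aestronglyMeasurable (by fun_prop))
      (by
        intro w hw
        rw [abs_mul, abs_of_pos (Real.rpow_pos_of_pos hw _)]
        calc _ ≤ w ^ (μ - 1) * (C * Real.exp (l * w)) := by gcongr; exact hmb w
          _ = _ := by ring) s hs).differentiableAt.differentiableWithinAt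
  · refine DifferentiableOn.analyticOnNhd (fun s hs => ?_) hU
    refine DifferentiableAt.differentiableWithinAt ?_
    unfold phi
    refine DifferentiableAt.const_mul (DifferentiableAt.mul (DifferentiableAt.div ?_ ?_ ?_) (by fun_prop)) _
    · refine DifferentiableAt.fun_finset_prod fun i _ => ?_
      exact DifferentiableAt.comp s (hGdiff _ (hGd _ _ (hA i) (ha i) s hs)).1 (by fun_prop)
    · refine DifferentiableAt.fun_finset_prod fun i _ => ?_
      exact DifferentiableAt.comp s (hGdiff _ (hGd _ _ (hB i) (hb i) s hs)).1 (by fun_prop)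
    · exact Finset.prod_ne_zero_iff.2 fun i _ => (hGdiff _ (hGd _ _ (hB i) (hb i) s hs)).2
  · have ht : Tendsto (fun x : ℝ => (x : ℂ)) (nhdsWithin (l + 1) {l + 1}ᶜ) (nhdsWithin ((l + 1 : ℝ) : ℂ) {((l + 1 : ℝ) : ℂ)}ᶜ) := by
      refine tendsto_nhdsWithin_iff.2 ⟨(Complex.continuous_ofReal.tendsto _).mono_left nhdsWithin_le_nhds, ?_⟩
      filter_upwards [self_mem_nhdsWithin] with x hx
      simpa using fun h : (x:ℂ) = l + 1 => hx (by exact_mod_cast h)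
    refine ht.frequently (Eventually.frequently ?_)
    have : ∀ᶠ x in nhds (l + 1), l < x := lt_mem_nhds (by linarith)
    filter_upwards [nhdsWithin_le_nhds this] with x hx
    rw [phi_ofReal A a B b hA hB ha hb L x (hl.trans hx), ← Complex.ofReal_mul, ← hκ x hx, ← integral_complex_ofReal]
    congr 1; ext w; push_cast; rfl

lemma csqrt_aux (x : ℝ) (hx : 0 ≤ x) : (x : ℂ) ^ (1 / 2 : ℂ) = ((Real.sqrt x : ℝ) : ℂ) := by
  rw [Real.sqrt_eq_rpow, Complex.ofReal_cpow hx]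
  norm_num

lemma gauss_line (ε c d u : ℝ) (hε : 0 < ε) :
    ∫ τ : ℝ, Complex.exp (((c + d : ℝ) + τ * Complex.I) * u) * Complex.exp (ε * ((d : ℂ) + τ * Complex.I) ^ 2) =
      Complex.exp (c * u) * ((Real.sqrt (Real.pi / ε) : ℝ) : ℂ) * Complex.exp (-(u ^ 2 / (4 * ε))) := by
  have h1 : ∀ τ : ℝ, Complex.exp (((c + d : ℝ) + τ * Complex.I) * u) * Complex.exp (ε * ((d : ℂ) + τ * Complex.I) ^ 2) =
      Complex.exp (((-ε : ℝ) : ℂ) * τ ^ 2 + (Complex.I * (u + 2 * ε * d)) * τ + (c * u + d * u + ε * d ^ 2)) := by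
    intro τ
    rw [← Complex.exp_add]
    congr 1
    push_cast
    ring_nf
    simp only [Complex.I_sq]
    ring
  simp only [h1]
  rw [integral_cexp_quadratic (by simpa using hε), ← csqrt_aux _ (by positivity)]
  have h2 : ((c:ℂ) * u + d * u + ε * d ^ 2) - (Complex.I * (u + 2 * ε * d)) ^ 2 / (4 * ((-ε : ℝ) : ℂ)) =
      c * u + -(u ^ 2 / (4 * ε)) := by
    have : (ε : ℂ) ≠ 0 := by exact_mod_cast hε.ne'
    rw [mul_pow, Complex.I_sq]
    push_cast
    field_simp
    ring
  rw [h2, Complex.exp_add]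
  push_cast
  rw [neg_neg]; ring

lemma inv_fubini (k : ℝ → ℝ) (c d w ε : ℝ) (hε : 0 < ε)
    (hk : IntegrableOn (fun v : ℝ => (k v : ℂ) * Complex.exp (-(((c + d : ℝ) : ℂ) * v))) (Set.Ioi 0)) :
    ∫ τ : ℝ, (∫ v in Set.Ioi (0:ℝ), (k v : ℂ) * Complex.exp (-((((c + d : ℝ) : ℂ) + τ * Complex.I) * v))) *
        Complex.exp ((((c + d : ℝ) : ℂ) + τ * Complex.I) * w) * Complex.exp (ε * ((d : ℂ) + τ * Complex.I) ^ 2) =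
    ∫ v in Set.Ioi (0:ℝ), (k v : ℂ) * (Complex.exp (c * ((w - v : ℝ) : ℂ)) * ((Real.sqrt (Real.pi / ε) : ℝ) : ℂ) *
      Complex.exp (-(((w - v : ℝ) : ℂ) ^ 2 / (4 * ε)))) := by
  simp only [← gauss_line ε c d _ hε, ← integral_const_mul, ← integral_mul_const]
  have e : ∀ τ v : ℝ, (k v : ℂ) * Complex.exp (-((((c + d : ℝ) : ℂ) + τ * Complex.I) * v)) *
        Complex.exp ((((c + d : ℝ) : ℂ) + τ * Complex.I) * w) * Complex.exp (ε * ((d : ℂ) + τ * Complex.I) ^ 2) =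
        (k v : ℂ) * (Complex.exp ((((c + d : ℝ) : ℂ) + τ * Complex.I) * ((w - v : ℝ) : ℂ)) *
          Complex.exp (ε * ((d : ℂ) + τ * Complex.I) ^ 2)) := by
    intro τ v
    rw [mul_assoc, mul_assoc, ← mul_assoc (Complex.exp _), ← Complex.exp_add]
    congr 4
    push_cast; ring
  simp only [e]
  rw [integral_integral_swap]
  have hg : Integrable (fun τ : ℝ => Complex.exp ((((c + d : ℝ) : ℂ) + τ * Complex.I) * w) *
      Complex.exp (ε * ((d : ℂ) + τ * Complex.I) ^ 2)) := by
    have := integrable_cexp_quadratic (b := (ε : ℂ)) (by simpa using hε) (Complex.I * (w + 2 * ε * d))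
      ((c + d) * w + ε * d ^ 2)
    refine this.congr (Eventually.of_forall fun τ => ?_)
    beta_reduce
    rw [← Complex.exp_add]
    congr 1
    push_cast
    ring_nf
    simp only [Complex.I_sq]
    ring
  have h1 := hg.mul_prod hk
  have h2 : Continuous (fun z : ℝ × ℝ => Complex.exp (((-(z.1 * z.2) : ℝ) : ℂ) * Complex.I)) := by fun_prop
  refine Integrable.congr (f := fun z : ℝ × ℝ => (Complex.exp ((((c + d : ℝ) : ℂ) + z.1 * Complex.I) * w) *
      Complex.exp (ε * ((d : ℂ) + z.1 * Complex.I) ^ 2)) * ((k z.2 : ℂ) * Complex.exp (-(((c + d : ℝ) : ℂ) * z.2))) *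
      Complex.exp (((-(z.1 * z.2) : ℝ) : ℂ) * Complex.I)) ?_ ?_
  · refine h1.mono (h1.aestronglyMeasurable.mul h2.aestronglyMeasurable) (Eventually.of_forall fun z => ?_)
    rw [norm_mul, Complex.norm_exp_ofReal_mul_I, mul_one]
  · refine Eventually.of_forall fun z => ?_
    simp only [Function.uncurry]
    have : Complex.exp ((((c + d : ℝ) : ℂ) + z.1 * Complex.I) * ((w - z.2 : ℝ) : ℂ)) =
      Complex.exp ((((c + d : ℝ) : ℂ) + z.1 * Complex.I) * w) * Complex.exp (-(((c + d : ℝ) : ℂ) * z.2)) *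
       Complex.exp (((-(z.1 * z.2) : ℝ) : ℂ) * Complex.I) := by
      rw [← Complex.exp_add, ← Complex.exp_add]
      congr 1; push_cast; ring
    rw [this]; ring

lemma inversion (k : ℝ → ℝ) (c d w : ℝ) (hw : 0 < w) (hkc : ContinuousAt k w)
    (hk : IntegrableOn (fun v : ℝ => (k v : ℂ) * Complex.exp (-(((c + d : ℝ) : ℂ) * v))) (Set.Ioi 0)) :
    Tendsto (fun N : ℝ => (((2 * Real.pi)⁻¹ : ℝ) : ℂ) * ∫ τ : ℝ, (∫ v in Set.Ioi (0:ℝ), (k v : ℂ) * Complex.exp (-((((c + d : ℝ) : ℂ) + τ * Complex.I) * v))) *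
        Complex.exp ((((c + d : ℝ) : ℂ) + τ * Complex.I) * w) *
        Complex.exp (((1 / (4 * (1 + Real.pi ^ 2 * N)) : ℝ) : ℂ) * ((d : ℂ) + τ * Complex.I) ^ 2)) atTop (nhds (k w : ℂ)) := by
  set g : ℝ → ℂ := Set.indicator (Set.Ioi 0) fun v => (k v : ℂ) * (Complex.exp (c * ((w - v : ℝ) : ℂ)) * Complex.exp (-(((w - v : ℝ) : ℂ) ^ 2))) with hg
  have hgi : Integrable g := by
    rw [hg, integrable_indicator_iff measurableSet_Ioi]
    refine Integrable.congr (f := fun v : ℝ => (k v : ℂ) * Complex.exp (-(((c + d : ℝ) : ℂ) * v)) *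
      Complex.exp ((((c + d) * v + c * (w - v) - (w - v) ^ 2 : ℝ) : ℂ))) ?_ (Eventually.of_forall fun v => ?_)
    · refine (hk.norm.mul_const (Real.exp ((c + d) * w + d ^ 2))).mono' (hk.aestronglyMeasurable.mul
        (Continuous.aestronglyMeasurable (by fun_prop))) (Eventually.of_forall fun v => ?_)
      rw [norm_mul, Complex.norm_exp_ofReal]
      gcongr
      nlinarith [sq_nonneg (w - v + d), sq_nonneg (w - v), sq_nonneg d]
    · beta_reduce
      rw [mul_assoc, ← Complex.exp_add, ← Complex.exp_add]
      congr 2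
      push_cast; ring
  have hgc : ContinuousAt g w := by
    have : g =ᶠ[nhds w] fun v => (k v : ℂ) * (Complex.exp (c * ((w - v : ℝ) : ℂ)) * Complex.exp (-(((w - v : ℝ) : ℂ) ^ 2))) := by
      filter_upwards [Ioi_mem_nhds hw] with v hv
      rw [hg, Set.indicator_of_mem hv]
    refine ContinuousAt.congr ?_ this.symm
    exact (Complex.continuous_ofReal.continuousAt.comp hkc).mul (Continuous.continuousAt (by fun_prop))
  have hgw : g w = k w := by
    rw [hg, Set.indicator_of_mem (Set.mem_Ioi.2 hw)]; simp
  have h1 := Real.tendsto_integral_gaussian_smul' hgi hgc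
  rw [hgw] at h1
  have h2 : Tendsto (fun N : ℝ => ((Real.sqrt (1 + (Real.pi ^ 2 * N)⁻¹) : ℝ) : ℂ)) atTop (nhds 1) := by
    have h3 : Tendsto (fun N : ℝ => (Real.pi ^ 2 * N)⁻¹) atTop (nhds 0) :=
      tendsto_inv_atTop_zero.comp (tendsto_id.const_mul_atTop (by positivity))
    have h4 : Tendsto (fun N : ℝ => Real.sqrt (1 + (Real.pi ^ 2 * N)⁻¹)) atTop (nhds 1) := by
      have := (h3.const_add 1).sqrt
      simpa using this
    have := (Complex.continuous_ofReal.tendsto 1).comp h4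
    rw [Complex.ofReal_one] at this
    exact this
  have h5 := h2.mul h1
  rw [one_mul] at h5
  refine h5.congr' ?_
  filter_upwards [eventually_gt_atTop 0] with N hN
  rw [inv_fubini k c d w _ (by positivity) hk, ← integral_const_mul, ← integral_const_mul,
    ← integral_indicator measurableSet_Ioi]
  congr 1
  ext v
  by_cases hv : v ∈ Set.Ioi (0:ℝ)
  · rw [Set.indicator_of_mem hv, hg, Set.indicator_of_mem hv]
    have e1 : ((Real.pi * N : ℂ)) ^ ((Module.finrank ℝ ℝ : ℂ) / 2) = ((Real.sqrt (Real.pi * N) : ℝ) : ℂ) := by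
      rw [← csqrt_aux _ (by positivity)]
      simp
    have e2 : (2 * Real.pi)⁻¹ * Real.sqrt (Real.pi / (1 / (4 * (1 + Real.pi ^ 2 * N)))) =
        Real.sqrt (1 + (Real.pi ^ 2 * N)⁻¹) * Real.sqrt (Real.pi * N) := by
      rw [← Real.sqrt_mul (by positivity)]
      have : Real.pi / (1 / (4 * (1 + Real.pi ^ 2 * N))) = (2 * Real.pi) ^ 2 * ((1 + (Real.pi ^ 2 * N)⁻¹) * (Real.pi * N)) := by
        field_simp
        ring
      rw [this, Real.sqrt_mul (by positivity), Real.sqrt_sq (by positivity), inv_mul_cancel_left₀ (by positivity)]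
    have e3 : Complex.exp (-(((w - v : ℝ) : ℂ) ^ 2 / (4 * ((1 / (4 * (1 + Real.pi ^ 2 * N)) : ℝ) : ℂ)))) =
        Complex.exp (-Real.pi ^ 2 * N * (‖w - v‖ : ℂ) ^ 2) * Complex.exp (-(((w - v : ℝ) : ℂ) ^ 2)) := by
      rw [← Complex.exp_add]
      congr 1
      have : (‖w - v‖ : ℂ) ^ 2 = ((w - v : ℝ) : ℂ) ^ 2 := by
        rw [Real.norm_eq_abs]; norm_cast; exact sq_abs _
      rw [this]
      have h0 : (1 + Real.pi ^ 2 * N) ≠ 0 := by positivity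
      have h0' : (1 + (Real.pi:ℂ) ^ 2 * N) ≠ 0 := by exact_mod_cast h0
      push_cast
      field_simp
      ring
    rw [e1, e3, smul_eq_mul]
    have e2' := congrArg (fun x : ℝ => (x : ℂ)) e2
    beta_reduce at e2'
    rw [Complex.ofReal_mul, Complex.ofReal_mul] at e2'
    calc _ = (((Real.sqrt (1 + (Real.pi ^ 2 * N)⁻¹) : ℝ) : ℂ) * ((Real.sqrt (Real.pi * N) : ℝ) : ℂ)) *
        (Complex.exp (-Real.pi ^ 2 * N * (‖w - v‖ : ℂ) ^ 2) * ((k v : ℂ) * (Complex.exp (c * ((w - v : ℝ) : ℂ)) * Complex.exp (-(((w - v : ℝ) : ℂ) ^ 2))))) := by ring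
      _ = _ := by rw [← e2']; ring
  · rw [Set.indicator_of_notMem hv, hg, Set.indicator_of_notMem hv]; simp

lemma abel_aux (f : ℝ → ℂ) (hf : Continuous f) (ε M : ℝ) (hε : 0 < ε)
    (hi : Integrable (fun t : ℝ => f t * Complex.exp (-(ε * (t : ℂ) ^ 2))))
    (hM : ∀ R, 0 < R → ‖∫ t in -R..R, f t‖ ≤ M) :
    ∫ t : ℝ, f t * Complex.exp (-(ε * (t : ℂ) ^ 2)) =
      ∫ r in Set.Ioi (0:ℝ), (∫ t in -(r / Real.sqrt ε)..(r / Real.sqrt ε), f t) * (2 * r * Complex.exp (-((r:ℂ) ^ 2))) := by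
  set S : ℝ → ℂ := fun R => ∫ t in -R..R, f t with hS
  have hSd : ∀ R, HasDerivAt S (f R + f (-R)) R := by
    intro R
    have h1 : ∀ x, HasDerivAt (fun u => ∫ t in (0:ℝ)..u, f t) (f x) x := fun x =>
      intervalIntegral.integral_hasDerivAt_right (hf.intervalIntegrable _ _)
        (hf.stronglyMeasurableAtFilter _ _) hf.continuousAt
    have h2 : HasDerivAt (fun u : ℝ => ∫ t in (0:ℝ)..(-u), f t) (-f (-R)) R := by
      have := HasDerivAt.scomp R (h1 (-R)) (hasDerivAt_neg R)
      rw [neg_one_smul] at this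
      exact this
    have h3 := (h1 R).sub h2
    convert! h3 using 1
    · ext R
      simp only [hS, Pi.sub_apply]
      rw [intervalIntegral.integral_interval_sub_left (hf.intervalIntegrable _ _) (hf.intervalIntegrable _ _)]
    · ring
  have hvd : ∀ R : ℝ, HasDerivAt (fun R : ℝ => Complex.exp (-(ε * (R : ℂ) ^ 2))) (-(2 * ε * R * Complex.exp (-(ε * (R : ℂ) ^ 2)))) R := by
    intro R
    have h1 : HasDerivAt (fun R : ℝ => (R : ℂ)) 1 R := Complex.ofRealCLM.hasDerivAt
    have h2 := (((h1.pow 2).const_mul (ε:ℂ)).neg).cexp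
    convert! h2 using 1
    simp
    ring
  have hn : ∀ x : ℝ, ‖Complex.exp (-(ε * (x : ℂ) ^ 2))‖ = Real.exp (-ε * x ^ 2) := by
    intro x
    rw [show -((ε:ℂ) * (x:ℂ)^2) = ((-ε * x ^ 2 : ℝ) : ℂ) by push_cast; ring, Complex.norm_exp_ofReal]
  have hSc : Continuous S := continuous_iff_continuousAt.2 fun x => (hSd x).continuousAt
  have hi1 : IntegrableOn (S * fun R : ℝ => -(2 * ε * R * Complex.exp (-(ε * (R : ℂ) ^ 2)))) (Set.Ioi 0) := by
    have h1 := (((integrable_mul_exp_neg_mul_sq hε).const_mul (M * (2 * ε))).integrableOn (s := Set.Ioi 0))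
    refine h1.mono' (Continuous.aestronglyMeasurable (by fun_prop)) ?_
    refine (ae_restrict_iff' measurableSet_Ioi).2 (Eventually.of_forall fun R hR => ?_)
    have hR : 0 < R := hR
    rw [Pi.mul_apply, norm_mul, norm_neg, norm_mul, hn]
    have : ‖2 * (ε:ℂ) * R‖ = 2 * ε * R := by
      rw [norm_mul, norm_mul, Complex.norm_real, Complex.norm_real, Real.norm_of_nonneg hε.le, Real.norm_of_nonneg hR.le]
      simp
    rw [this]
    calc _ ≤ M * (2 * ε * R * Real.exp (-ε * R ^ 2)) := by gcongr; exact hM R hR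
      _ = _ := by ring
  have hi2 : Integrable (fun t : ℝ => f (-t) * Complex.exp (-(ε * (t : ℂ) ^ 2))) := by
    have := hi.comp_neg
    simpa using this
  have hi3 : IntegrableOn ((fun R => f R + f (-R)) * fun R : ℝ => Complex.exp (-(ε * (R : ℂ) ^ 2))) (Set.Ioi 0) := by
    have := (hi.add hi2).integrableOn (s := Set.Ioi 0)
    refine this.congr (Eventually.of_forall fun R => ?_)
    simp only [Pi.add_apply, Pi.mul_apply]; ring
  have ht0 : Tendsto (S * fun R : ℝ => Complex.exp (-(ε * (R : ℂ) ^ 2))) (nhdsWithin 0 (Set.Ioi 0)) (nhds 0) := by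
    have hc : Continuous (S * fun R : ℝ => Complex.exp (-(ε * (R : ℂ) ^ 2))) := by fun_prop
    have := hc.tendsto 0
    have e : (S * fun R : ℝ => Complex.exp (-(ε * (R : ℂ) ^ 2))) 0 = 0 := by simp [hS]
    rw [e] at this
    exact this.mono_left nhdsWithin_le_nhds
  have ht1 : Tendsto (S * fun R : ℝ => Complex.exp (-(ε * (R : ℂ) ^ 2))) atTop (nhds 0) := by
    have h1 : Tendsto (fun R : ℝ => M * Real.exp (-ε * R ^ 2)) atTop (nhds 0) := by
      have : Tendsto (fun R : ℝ => ε * R ^ 2) atTop atTop := (tendsto_pow_atTop two_ne_zero).const_mul_atTop hε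
      have := (Real.tendsto_exp_neg_atTop_nhds_zero.comp this).const_mul M
      simpa [Function.comp_def] using this
    refine squeeze_zero_norm' ?_ h1
    filter_upwards [eventually_gt_atTop 0] with R hR
    rw [Pi.mul_apply, norm_mul, hn]
    gcongr; exact hM R hR
  have hparts := integral_Ioi_mul_deriv_eq_deriv_mul (fun x _ => hSd x) (fun x _ => hvd x) hi1 hi3 ht0 ht1
  have hL : ∫ t : ℝ, f t * Complex.exp (-(ε * (t : ℂ) ^ 2)) =
      ∫ R in Set.Ioi (0:ℝ), (f R + f (-R)) * Complex.exp (-(ε * (R : ℂ) ^ 2)) := by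
    rw [← intervalIntegral.integral_Iic_add_Ioi (b := 0) hi.integrableOn hi.integrableOn]
    have := integral_comp_neg_Ioi 0 (fun t : ℝ => f t * Complex.exp (-(ε * (t : ℂ) ^ 2)))
    rw [neg_zero] at this
    rw [← this, ← integral_add]
    · congr 1; ext R; push_cast; ring
    · have := hi2.integrableOn (s := Set.Ioi 0)
      simpa [IntegrableOn] using this
    · exact hi.integrableOn
  rw [hL]
  have h1 : ∫ R in Set.Ioi (0:ℝ), (f R + f (-R)) * Complex.exp (-(ε * (R : ℂ) ^ 2)) =
     ∫ R in Set.Ioi (0:ℝ), S R * (2 * ε * R * Complex.exp (-(ε * (R : ℂ) ^ 2))) := by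
    have : ∀ R : ℝ, S R * (2 * ε * R * Complex.exp (-(ε * (R : ℂ) ^ 2))) = -(S R * -(2 * ε * R * Complex.exp (-(ε * (R : ℂ) ^ 2)))) := fun R => by ring
    simp only [this]
    rw [integral_neg, hparts]; ring
  rw [h1]
  have hs : 0 < Real.sqrt ε := Real.sqrt_pos.2 hε
  have h2 := integral_comp_mul_left_Ioi (fun r : ℝ => S (r / Real.sqrt ε) * (2 * r * Complex.exp (-((r:ℂ) ^ 2)))) 0 hs
  rw [mul_zero] at h2
  have h3 : (∫ r in Set.Ioi (0:ℝ), S (r / Real.sqrt ε) * (2 * r * Complex.exp (-((r:ℂ) ^ 2)))) =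
     Real.sqrt ε • ((Real.sqrt ε)⁻¹ • ∫ r in Set.Ioi (0:ℝ), S (r / Real.sqrt ε) * (2 * r * Complex.exp (-((r:ℂ) ^ 2)))) := by
    rw [smul_smul, mul_inv_cancel₀ hs.ne', one_smul]
  rw [h3, ← h2, ← integral_smul]
  congr 1
  ext R
  beta_reduce
  rw [mul_div_cancel_left₀ _ hs.ne']
  have h4 : ((Real.sqrt ε : ℝ) : ℂ) ^ 2 = ε := by
    rw [← Complex.ofReal_pow, Real.sq_sqrt hε.le]
  rw [Complex.real_smul]
  push_cast
  rw [mul_pow, h4, ← h4]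
  ring

lemma abel_summ (f : ℝ → ℂ) (hf : Continuous f) (S : ℂ)
    (hi : ∀ ε : ℝ, 0 < ε → Integrable (fun t : ℝ => f t * Complex.exp (-(ε * (t : ℂ) ^ 2))))
    (hS : Tendsto (fun R : ℝ => ∫ t in -R..R, f t) atTop (nhds S)) :
    Tendsto (fun ε : ℝ => ∫ t : ℝ, f t * Complex.exp (-(ε * (t : ℂ) ^ 2))) (nhdsWithin 0 (Set.Ioi 0)) (nhds S) := by
  have hcont : Continuous (fun R : ℝ => ∫ t in -R..R, f t) := by
    have h1 := intervalIntegral.continuous_primitive (μ := volume) (fun a b => hf.intervalIntegrable a b) 0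
    have h2 : Continuous (fun R : ℝ => (∫ t in (0:ℝ)..R, f t) - ∫ t in (0:ℝ)..(-R), f t) :=
      h1.sub (h1.comp continuous_neg)
    refine h2.congr fun R => ?_
    rw [intervalIntegral.integral_interval_sub_left (hf.intervalIntegrable _ _) (hf.intervalIntegrable _ _)]
  obtain ⟨M, hM⟩ : ∃ M, ∀ R, 0 < R → ‖∫ t in -R..R, f t‖ ≤ M := by
    have h1 : ∀ᶠ R in atTop, ‖∫ t in -R..R, f t‖ < ‖S‖ + 1 := hS.norm.eventually (gt_mem_nhds (by linarith))
    obtain ⟨R0, hR0⟩ := eventually_atTop.1 h1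
    obtain ⟨M1, hM1⟩ := (isCompact_Icc (a := 0) (b := R0)).exists_bound_of_continuousOn hcont.continuousOn
    refine ⟨max M1 (‖S‖ + 1), fun R hR => ?_⟩
    by_cases h : R0 ≤ R
    · exact (hR0 R h).le.trans (le_max_right _ _)
    · exact (hM1 R ⟨hR.le, (not_le.1 h).le⟩).trans (le_max_left _ _)
  have key : Tendsto (fun ε : ℝ => ∫ r in Set.Ioi (0:ℝ), (∫ t in -(r / Real.sqrt ε)..(r / Real.sqrt ε), f t) * (2 * r * Complex.exp (-((r:ℂ) ^ 2))))
      (nhdsWithin 0 (Set.Ioi 0)) (nhds (∫ r in Set.Ioi (0:ℝ), S * (2 * r * Complex.exp (-((r:ℂ) ^ 2))))) := by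
    refine tendsto_integral_filter_of_dominated_convergence (fun r => M * 2 * (r * Real.exp (-1 * r ^ 2))) ?_ ?_ ?_ ?_
    · refine Eventually.of_forall fun ε => Continuous.aestronglyMeasurable ?_
      exact (hcont.comp (by fun_prop : Continuous fun r : ℝ => r / Real.sqrt ε)).mul (by fun_prop)
    · filter_upwards [self_mem_nhdsWithin] with ε hε
      refine (ae_restrict_iff' measurableSet_Ioi).2 (Eventually.of_forall fun R hR => ?_)
      have hR : 0 < R := hR
      have hε : 0 < ε := hε
      have h1 : ‖2 * (R:ℂ) * Complex.exp (-((R:ℂ) ^ 2))‖ = 2 * (R * Real.exp (-1 * R ^ 2)) := by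
        rw [norm_mul, norm_mul, Complex.norm_real, Real.norm_of_nonneg hR.le,
          show -((R:ℂ)^2) = ((-1 * R ^ 2 : ℝ) : ℂ) by push_cast; ring, Complex.norm_exp_ofReal]
        simp; ring
      rw [norm_mul, h1, mul_assoc]
      gcongr
      exact hM _ (by positivity)
    · exact ((integrable_mul_exp_neg_mul_sq one_pos).const_mul _).integrableOn
    · refine (ae_restrict_iff' measurableSet_Ioi).2 (Eventually.of_forall fun R hR => ?_)
      have hR : 0 < R := hR
      refine Tendsto.mul_const _ (hS.comp ?_)
      have h1 : Tendsto Real.sqrt (nhdsWithin 0 (Set.Ioi 0)) (nhdsWithin 0 (Set.Ioi 0)) := by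
        refine tendsto_nhdsWithin_iff.2 ⟨?_, ?_⟩
        · have := (Real.continuous_sqrt.tendsto 0)
          rw [Real.sqrt_zero] at this
          exact this.mono_left nhdsWithin_le_nhds
        · filter_upwards [self_mem_nhdsWithin] with ε hε
          exact Real.sqrt_pos.2 hε
      simp only [div_eq_mul_inv]
      exact (tendsto_inv_nhdsGT_zero.comp h1).const_mul_atTop hR
  have e : ∫ r in Set.Ioi (0:ℝ), S * (2 * r * Complex.exp (-((r:ℂ) ^ 2))) = S := by
    have h := integral_mul_cexp_neg_mul_sq (b := 1) (by simp)
    have : ∀ r : ℝ, S * (2 * r * Complex.exp (-((r:ℂ) ^ 2))) = (2 * S) * (r * Complex.exp (-1 * (r:ℂ) ^ 2)) := by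
      intro r; rw [neg_one_mul]; ring
    simp only [this]
    rw [integral_const_mul, h]
    ring
  rw [e] at key
  refine key.congr' ?_
  filter_upwards [self_mem_nhdsWithin] with ε hε
  exact (abel_aux f hf ε M hε (hi ε hε) hM).symm

lemma Gamma_norm_le (z : ℂ) (hz : 0 < z.re) : ‖Complex.Gamma z‖ ≤ Real.Gamma z.re := by
  rw [Complex.Gamma_eq_integral hz, Real.Gamma_eq_integral hz, Complex.GammaIntegral]
  refine (norm_integral_le_integral_norm _).trans (le_of_eq ?_)
  refine setIntegral_congr_fun measurableSet_Ioi fun x hx => ?_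
  beta_reduce
  rw [norm_mul, Complex.norm_real, Real.norm_of_nonneg (Real.exp_pos _).le, Complex.norm_cpow_eq_rpow_re_of_pos hx]
  simp

lemma Gamma_bound (α β : ℝ) (hα : 0 < α) : ∃ C, 0 ≤ C ∧ ∀ z : ℂ, α ≤ z.re → z.re ≤ β → ‖Complex.Gamma z‖ ≤ C := by
  obtain ⟨C, hC⟩ := (isCompact_Icc (a := α) (b := β)).exists_bound_of_continuousOn (f := Real.Gamma) (by
    intro x hx
    refine (Real.differentiableAt_Gamma fun m h => ?_).continuousAt.continuousWithinAt
    have := hx.1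
    linarith [(Nat.cast_nonneg m : (0:ℝ) ≤ m)])
  refine ⟨max C 0, le_max_right _ _, fun z h1 h2 => ?_⟩
  refine (Gamma_norm_le z (by linarith)).trans (le_trans ?_ (le_max_left _ _))
  exact (le_abs_self _).trans (hC z.re ⟨h1, h2⟩)

lemma sin_norm_le (z : ℂ) : ‖Complex.sin z‖ ≤ Real.exp |z.im| := by
  rw [Complex.sin, norm_div, norm_mul, Complex.norm_I, mul_one]
  have h1 : ‖Complex.exp (-z * Complex.I)‖ ≤ Real.exp |z.im| := by
    rw [Complex.norm_exp]
    apply Real.exp_le_exp.2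
    simp [le_abs_self]
  have h2 : ‖Complex.exp (z * Complex.I)‖ ≤ Real.exp |z.im| := by
    rw [Complex.norm_exp]
    apply Real.exp_le_exp.2
    simp [neg_le_abs]
  have h3 := (norm_sub_le (Complex.exp (-z * Complex.I)) (Complex.exp (z * Complex.I)))
  rw [Complex.norm_ofNat]
  linarith

lemma rGamma_shift (z : ℂ) (hz : 1 ≤ |z.im|) (N : ℕ) : ‖(Complex.Gamma (z + N))⁻¹‖ ≤ ‖(Complex.Gamma z)⁻¹‖ := by
  induction N with
  | zero => simp
  | succ n ih =>
    have him : 1 ≤ ‖z + n‖ := by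
      have := Complex.abs_im_le_norm (z + n)
      simp at this
      linarith
    have h0 : z + n ≠ 0 := by
      intro h; rw [h] at him; simp at him; linarith
    rw [show z + ((n + 1 : ℕ) : ℂ) = (z + n) + 1 by push_cast; ring, Complex.Gamma_add_one _ h0, mul_inv, norm_mul, norm_inv]
    calc ‖z + n‖⁻¹ * ‖(Complex.Gamma (z + n))⁻¹‖ ≤ 1 * ‖(Complex.Gamma (z + n))⁻¹‖ := by
          gcongr
          exact inv_le_one_of_one_le₀ him
      _ ≤ _ := by rw [one_mul]; exact ih

lemma rGamma_bound (α β : ℝ) : ∃ C, 0 ≤ C ∧ ∀ z : ℂ, α ≤ z.re → z.re ≤ β →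
    ‖(Complex.Gamma z)⁻¹‖ ≤ C * Real.exp (Real.pi * |z.im|) := by
  obtain ⟨N, hN⟩ := exists_nat_gt β
  obtain ⟨C1, hC10, hC1⟩ := Gamma_bound (1 - β + N) (1 - α + N) (by linarith)
  obtain ⟨C2, hC2⟩ := ((isCompact_Icc (a := α) (b := β)).reProdIm (isCompact_Icc (a := (-1:ℝ)) (b := 1))).exists_bound_of_continuousOn
    (f := fun s => (Complex.Gamma s)⁻¹) Complex.differentiable_one_div_Gamma.continuous.continuousOn
  refine ⟨C1 + max C2 0, by positivity, fun z h1 h2 => ?_⟩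
  have hm : 0 ≤ max C2 0 := le_max_right _ _
  have he : 1 ≤ Real.exp (Real.pi * |z.im|) := Real.one_le_exp (by positivity)
  by_cases h : 1 ≤ |z.im|
  · have h3 := rGamma_shift (z - N) (by simpa using h) N
    rw [sub_add_cancel] at h3
    refine h3.trans ?_
    set w := z - N with hw
    have hwre : w.re = z.re - N := by simp [hw]
    have hwim : w.im = z.im := by simp [hw]
    by_cases hg : Complex.Gamma w = 0
    · rw [hg]; simp; positivity
    have hr := Complex.Gamma_mul_Gamma_one_sub w
    have hg2 : Complex.Gamma (1 - w) ≠ 0 := Complex.Gamma_ne_zero_of_re_pos (by simp [hwre]; linarith)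
    have hs : Complex.sin (Real.pi * w) ≠ 0 := by
      intro hs
      rw [hs, div_zero] at hr
      exact (mul_ne_zero hg hg2) hr
    have hpi : (Real.pi : ℂ) ≠ 0 := by exact_mod_cast Real.pi_ne_zero
    have e : (Complex.Gamma w)⁻¹ = Complex.Gamma (1 - w) * Complex.sin (Real.pi * w) / Real.pi := by
      rw [eq_div_iff hs] at hr
      field_simp
      rw [mul_comm w]
      exact hr.symm
    rw [e, norm_div, norm_mul, Complex.norm_real, Real.norm_of_nonneg Real.pi_pos.le]
    have h4 := hC1 (1 - w) (by simp [hwre]; linarith) (by simp [hwre]; linarith)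
    have h5 := sin_norm_le (Real.pi * w)
    have h6 : |((Real.pi:ℂ) * w).im| = Real.pi * |z.im| := by
      simp [hwim, abs_mul, abs_of_pos Real.pi_pos]
    rw [h6] at h5
    rw [div_le_iff₀ Real.pi_pos]
    calc _ ≤ C1 * Real.exp (Real.pi * |z.im|) := by gcongr
      _ ≤ ((C1 + max C2 0) * Real.exp (Real.pi * |z.im|)) * 1 := by rw [mul_one]; gcongr; linarith
      _ ≤ _ := by gcongr; linarith [Real.pi_gt_three]
  · push Not at h
    rw [abs_lt] at h
    have h3 : ‖(Complex.Gamma z)⁻¹‖ ≤ C2 := hC2 z (Complex.mem_reProdIm.2 ⟨⟨h1, h2⟩, ⟨h.1.le, h.2.le⟩⟩)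
    calc _ ≤ (C1 + max C2 0) * 1 := by linarith [le_max_left C2 0]
      _ ≤ _ := by gcongr

lemma phi_bound {p q : ℕ} (A a : Fin p → ℝ) (B b : Fin q → ℝ) (hA : ∀ k, 0 < A k) (hB : ∀ j, 0 < B j)
    (c c' : ℝ) (hc : ∀ k, 0 < A k * c + a k) :
    ∃ C D, 0 ≤ C ∧ 0 ≤ D ∧ ∀ s : ℂ, c ≤ s.re → s.re ≤ c' → ‖phi A a B b s‖ ≤ C * Real.exp (D * |s.im|) := by
  choose C1 hC10 hC1 using fun k => Gamma_bound (A k * c + a k) (A k * c' + a k) (hc k)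
  choose C2 hC20 hC2 using fun k => rGamma_bound (B k * c + b k) (B k * c' + b k)
  refine ⟨(∏ k, C1 k) * ∏ j, C2 j, ∑ j, Real.pi * B j, mul_nonneg (Finset.prod_nonneg fun i _ => hC10 i) (Finset.prod_nonneg fun i _ => hC20 i),
    Finset.sum_nonneg fun j _ => mul_nonneg Real.pi_pos.le (hB j).le, fun s h1 h2 => ?_⟩
  unfold phi
  rw [div_eq_mul_inv, ← Finset.prod_inv_distrib, norm_mul, norm_prod, norm_prod, mul_assoc, Finset.sum_mul, Real.exp_sum,
    ← Finset.prod_mul_distrib]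
  refine mul_le_mul ?_ ?_ (Finset.prod_nonneg fun i _ => norm_nonneg _) (Finset.prod_nonneg fun i _ => hC10 i)
  · refine Finset.prod_le_prod (fun i _ => norm_nonneg _) fun i _ => ?_
    have := hA i
    refine hC1 i _ ?_ ?_ <;> simp <;> gcongr
  · refine Finset.prod_le_prod (fun i _ => norm_nonneg _) fun i _ => ?_
    have hBi := hB i
    have := hC2 i ((B i : ℂ) * s + b i) (by simp; gcongr) (by simp; gcongr)
    simp [abs_mul, abs_of_pos hBi] at this
    rw [norm_inv, mul_assoc]
    exact this

lemma phi_diff {p q : ℕ} (A a : Fin p → ℝ) (B b : Fin q → ℝ)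
    (s : ℂ) (hs : ∀ k, 0 < A k * s.re + a k) : DifferentiableAt ℂ (phi A a B b) s := by
  have e : phi A a B b = fun s => (∏ k, Complex.Gamma ((A k : ℂ) * s + (a k : ℂ))) * (∏ j, (Complex.Gamma ((B j : ℂ) * s + (b j : ℂ)))⁻¹) := by
    ext s
    rw [phi, div_eq_mul_inv, ← Finset.prod_inv_distrib]
  rw [e]
  refine DifferentiableAt.mul ?_ ?_
  · refine DifferentiableAt.fun_finsetProd fun i _ => ?_
    refine DifferentiableAt.comp s (Complex.differentiableAt_Gamma _ fun n h => ?_) (by fun_prop)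
    have h1 := congrArg Complex.re h
    simp at h1
    linarith [hs i, (Nat.cast_nonneg n : (0:ℝ) ≤ n)]
  · refine DifferentiableAt.fun_finsetProd fun i _ => ?_
    exact DifferentiableAt.comp (g := fun s => (Complex.Gamma s)⁻¹) (f := fun s : ℂ => (B i : ℂ) * s + (b i : ℂ)) s
      (Complex.differentiable_one_div_Gamma _) (by fun_prop)

lemma contour_shift (F : ℂ → ℂ) (c c' C δ : ℝ) (hcc : c ≤ c') (hδ : 0 < δ)
    (hF : ∀ s : ℂ, c ≤ s.re → s.re ≤ c' → DifferentiableAt ℂ F s)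
    (hb : ∀ s : ℂ, c ≤ s.re → s.re ≤ c' → ‖F s‖ ≤ C * Real.exp (-δ * s.im ^ 2)) :
    Integrable (fun t : ℝ => F ((c : ℂ) + t * Complex.I)) ∧
    ∫ t : ℝ, F ((c : ℂ) + t * Complex.I) = ∫ t : ℝ, F ((c' : ℂ) + t * Complex.I) := by
  have hint : ∀ σ, c ≤ σ → σ ≤ c' → Integrable (fun t : ℝ => F ((σ : ℂ) + t * Complex.I)) := by
    intro σ h1 h2
    refine ((integrable_exp_neg_mul_sq hδ).const_mul C).mono' (Continuous.aestronglyMeasurable ?_) (Eventually.of_forall fun t => ?_)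
    · refine continuous_iff_continuousAt.2 fun t => ?_
      exact ContinuousAt.comp (f := fun t : ℝ => (σ : ℂ) + t * Complex.I) (hF _ (by simpa using h1) (by simpa using h2)).continuousAt
        (Continuous.continuousAt (by fun_prop))
    · have := hb ((σ : ℂ) + t * Complex.I) (by simpa using h1) (by simpa using h2)
      simpa using this
  refine ⟨hint c le_rfl hcc, ?_⟩
  have h0 : Tendsto (fun T : ℝ => C * Real.exp (-δ * T ^ 2) * |c' - c|) atTop (nhds 0) := by
    have : Tendsto (fun R : ℝ => δ * R ^ 2) atTop atTop := (tendsto_pow_atTop two_ne_zero).const_mul_atTop hδ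
    have := ((Real.tendsto_exp_neg_atTop_nhds_zero.comp this).const_mul C).mul_const |c' - c|
    simpa [Function.comp_def] using this
  have hz : ∀ g : ℝ → ℝ, (∀ T, g T ^ 2 = T ^ 2) → Tendsto (fun T : ℝ => ∫ x in c..c', F (x + (g T : ℂ) * Complex.I)) atTop (nhds 0) := by
    intro g hg
    refine squeeze_zero_norm (fun T => ?_) h0
    refine intervalIntegral.norm_integral_le_of_norm_le_const fun x hx => ?_
    rw [Set.uIoc_of_le hcc] at hx
    have := hb (x + (g T : ℂ) * Complex.I) (by simpa using hx.1.le) (by simpa using hx.2)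
    simpa [hg] using this
  have ht1 := hz (fun T => -T) (fun T => by ring)
  have ht2 := hz (fun T => T) (fun T => by ring)
  have ht3 := intervalIntegral_tendsto_integral (hint c' hcc le_rfl) tendsto_neg_atTop_atBot tendsto_id
  have ht4 := intervalIntegral_tendsto_integral (hint c le_rfl hcc) tendsto_neg_atTop_atBot tendsto_id
  have hlim := ((ht1.sub ht2).add (ht3.const_smul Complex.I)).sub (ht4.const_smul Complex.I)
  have hconst : Tendsto (fun _ : ℝ => (0:ℂ)) atTop (nhds 0) := tendsto_const_nhds
  have heq := tendsto_nhds_unique (hlim.congr (f₂ := fun _ => (0:ℂ)) ?_) hconst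
  · rw [sub_zero, zero_add, ← smul_sub, smul_eq_mul] at heq
    rcases mul_eq_zero.1 heq with h | h
    · exact absurd h Complex.I_ne_zero
    · exact (sub_eq_zero.1 h).symm
  · intro T
    have := Complex.integral_boundary_rect_eq_zero_of_differentiableOn F ((c:ℂ) + ((-T : ℝ) : ℂ) * Complex.I) ((c':ℂ) + (T : ℂ) * Complex.I) ?_
    · simpa using this
    · intro s hs
      rw [Complex.mem_reProdIm] at hs
      have h1 := hs.1
      simp at h1
      rw [Set.uIcc_of_le hcc] at h1
      exact (hF s h1.1 h1.2).differentiableWithinAt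

lemma transfer {p q : ℕ} (A a : Fin p → ℝ) (B b : Fin q → ℝ) (hA : ∀ k, 0 < A k) (hB : ∀ j, 0 < B j)
    (c : ℝ) (hc : ∀ k, 0 < A k * c + a k) (L : ℝ)
    (μ l C : ℝ) (hμ : 0 < μ) (m : ℝ → ℝ) (hm : Continuous m)
    (hmb : ∀ w, |m w| ≤ C * Real.exp (l * w)) (κ : ℝ)
    (hK : ∀ s : ℂ, l < s.re → (∫ w in Set.Ioi (0:ℝ), ((w ^ (μ - 1) * m w : ℝ) : ℂ) * Complex.exp (-(s * w))) =
      κ * (phi A a B b s * Complex.exp (-(s * L))))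
    (x : ℝ) (hx : 0 < x) (hw : 0 < L - Real.log x) (H : ℝ)
    (hH : Tendsto (fun R : ℝ => (((2 * Real.pi)⁻¹ : ℝ) : ℂ) *
        ∫ t in -R..R, phi A a B b ((c : ℂ) + (t : ℂ) * Complex.I) *
            (x : ℂ) ^ (-((c : ℂ) + (t : ℂ) * Complex.I))) atTop (nhds (H : ℂ))) :
    κ * H = (L - Real.log x) ^ (μ - 1) * m (L - Real.log x) := by
  set w := L - Real.log x with hwdef
  set c' := max c l + 1 with hc'
  have hcc : c ≤ c' := by rw [hc']; linarith [le_max_left c l]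
  have hlc : l < c' := by rw [hc']; linarith [le_max_right c l]
  set d := c' - c with hd
  have hcd : c + d = c' := by rw [hd]; ring
  have hd0 : 0 ≤ d := by rw [hd]; linarith
  have hxc : (x : ℂ) ≠ 0 := by exact_mod_cast hx.ne'
  set f : ℂ → ℂ := fun s => phi A a B b s * (x : ℂ) ^ (-s) with hf
  have hpos : ∀ s : ℂ, c ≤ s.re → ∀ k, 0 < A k * s.re + a k := fun s hs k => by
    have := hc k
    have := mul_le_mul_of_nonneg_left hs (hA k).le
    linarith
  have hfd : ∀ s : ℂ, c ≤ s.re → DifferentiableAt ℂ f s := by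
    intro s hs
    refine (phi_diff A a B b s (hpos s hs)).mul ?_
    exact DifferentiableAt.const_cpow (by fun_prop) (Or.inl hxc)
  obtain ⟨C1, D, hC1, hD, hphi⟩ := phi_bound A a B b hA hB c c' hc
  obtain ⟨C3, hC3⟩ := (isCompact_Icc (a := c) (b := c')).exists_bound_of_continuousOn
    (f := fun σ : ℝ => x ^ (-σ)) (Continuous.continuousOn (by
      exact Continuous.rpow continuous_const continuous_neg fun σ => Or.inl hx.ne'))
  have hshift : ∀ ε : ℝ, 0 < ε →
      Integrable (fun t : ℝ => f ((c : ℂ) + t * Complex.I) * Complex.exp (-(ε * (t:ℂ) ^ 2))) ∧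
      ∫ t : ℝ, f ((c : ℂ) + t * Complex.I) * Complex.exp (-(ε * (t:ℂ) ^ 2)) =
       ∫ t : ℝ, f ((c' : ℂ) + t * Complex.I) * Complex.exp (ε * ((d:ℂ) + t * Complex.I) ^ 2) := by
    intro ε hε
    have h := contour_shift (fun s => f s * Complex.exp (ε * (s - c) ^ 2)) c c'
      (C1 * C3 * Real.exp (ε * d ^ 2 + D ^ 2 / (2 * ε))) (ε / 2) hcc (by positivity) ?_ ?_
    · have e1 : ∀ t : ℝ, Complex.exp (ε * ((c:ℂ) + t * Complex.I - c) ^ 2) = Complex.exp (-(ε * (t:ℂ) ^ 2)) := by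
        intro t; congr 1; rw [add_sub_cancel_left, mul_pow, Complex.I_sq]; ring
      have e2 : ∀ t : ℝ, Complex.exp (ε * ((c':ℂ) + t * Complex.I - c) ^ 2) = Complex.exp (ε * ((d:ℂ) + t * Complex.I) ^ 2) := by
        intro t; congr 3; rw [hd]; push_cast; ring
      simp only [e1, e2] at h
      exact h
    · intro s h1 _
      exact (hfd s h1).mul (by fun_prop)
    · intro s h1 h2
      rw [hf, norm_mul, norm_mul, Complex.norm_exp, Complex.norm_cpow_eq_rpow_re_of_pos hx]
      have h3 := hC3 s.re ⟨h1, h2⟩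
      rw [Real.norm_of_nonneg (by positivity)] at h3
      have h4 := hphi s h1 h2
      have h5 : ((ε:ℂ) * (s - c) ^ 2).re = ε * ((s.re - c) ^ 2 - s.im ^ 2) := by
        rw [pow_two]; simp; left; ring
      rw [h5]
      have hC30 : 0 ≤ C3 := le_trans (by positivity) h3
      have h6 : D * |s.im| + ε * ((s.re - c) ^ 2 - s.im ^ 2) ≤ ε * d ^ 2 + D ^ 2 / (2 * ε) + -(ε / 2) * s.im ^ 2 := by
        have h7 : (s.re - c) ^ 2 ≤ d ^ 2 := by
          apply pow_le_pow_left₀ (by linarith); rw [hd]; linarith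
        have h8 : D * |s.im| ≤ D ^ 2 / (2 * ε) + ε / 2 * s.im ^ 2 := by
          rw [← sq_abs s.im]
          have : D ^ 2 / (2 * ε) + ε / 2 * |s.im| ^ 2 - D * |s.im| = (D - ε * |s.im|) ^ 2 / (2 * ε) := by
            field_simp; ring
          have h9 : 0 ≤ (D - ε * |s.im|) ^ 2 / (2 * ε) := by positivity
          linarith
        nlinarith
      rw [Complex.neg_re]
      calc _ ≤ C1 * Real.exp (D * |s.im|) * C3 * Real.exp (ε * ((s.re - c) ^ 2 - s.im ^ 2)) := by gcongr
        _ = C1 * C3 * Real.exp (D * |s.im| + ε * ((s.re - c) ^ 2 - s.im ^ 2)) := by rw [Real.exp_add]; ring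
        _ ≤ C1 * C3 * Real.exp (ε * d ^ 2 + D ^ 2 / (2 * ε) + -(ε / 2) * s.im ^ 2) := by gcongr
        _ = _ := by rw [Real.exp_add]; ring
  have hpi : ((2 * Real.pi : ℝ) : ℂ) ≠ 0 := by
    have : (2 * Real.pi) ≠ 0 := by positivity
    exact_mod_cast this
  have hS : Tendsto (fun R : ℝ => ∫ t in -R..R, f ((c : ℂ) + (t : ℂ) * Complex.I)) atTop (nhds ((2 * Real.pi : ℝ) * (H:ℂ))) := by
    refine (hH.const_mul ((2 * Real.pi : ℝ) : ℂ)).congr fun R => ?_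
    rw [← mul_assoc, Complex.ofReal_inv, mul_inv_cancel₀ hpi, one_mul]
  have hab := abel_summ (fun t : ℝ => f ((c : ℂ) + (t : ℂ) * Complex.I)) (by
    refine continuous_iff_continuousAt.2 fun t => ?_
    exact ContinuousAt.comp (f := fun t : ℝ => (c : ℂ) + t * Complex.I) (hfd _ (by simp)).continuousAt
      (Continuous.continuousAt (by fun_prop))) _ (fun ε hε => (hshift ε hε).1) hS
  have hεt : Tendsto (fun N : ℝ => 1 / (4 * (1 + Real.pi ^ 2 * N))) atTop (nhdsWithin 0 (Set.Ioi 0)) := by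
    have h1 : Tendsto (fun N : ℝ => 4 * (1 + Real.pi ^ 2 * N)) atTop atTop :=
      (tendsto_atTop_add_const_left _ 1 (tendsto_id.const_mul_atTop (by positivity))).const_mul_atTop (by norm_num)
    simp only [one_div]
    exact tendsto_inv_atTop_nhdsGT_zero.comp h1
  have hab2 := ((hab.comp hεt).const_mul ((((2 * Real.pi)⁻¹ : ℝ) : ℂ) * κ))
  have hki : IntegrableOn (fun v : ℝ => ((v ^ (μ - 1) * m v : ℝ) : ℂ) * Complex.exp (-(((c + d : ℝ) : ℂ) * v))) (Set.Ioi 0) :=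
    lap_int μ l C hμ (fun w => w ^ (μ - 1) * m w)
      (by have := hm.measurable; exact Measurable.aestronglyMeasurable (by fun_prop))
      (by
        intro w hw
        rw [abs_mul, abs_of_pos (Real.rpow_pos_of_pos hw _)]
        calc _ ≤ w ^ (μ - 1) * (C * Real.exp (l * w)) := by gcongr; exact hmb w
          _ = _ := by ring) ((c + d : ℝ) : ℂ) (by rw [Complex.ofReal_re, hcd]; exact hlc)
  have hinv := inversion (fun w => w ^ (μ - 1) * m w) c d w hw
    ((Real.continuousAt_rpow_const w (μ - 1) (Or.inl hw.ne')).mul hm.continuousAt) hki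
  have hfin := tendsto_nhds_unique (hab2.congr' ?_) hinv
  · have : (((κ * H : ℝ)) : ℂ) = ((w ^ (μ - 1) * m w : ℝ) : ℂ) := by
      rw [← hfin]
      push_cast
      have : (2 * (Real.pi:ℂ)) ≠ 0 := by push_cast at hpi; exact hpi
      field_simp
    exact_mod_cast this
  · filter_upwards [eventually_gt_atTop 0] with N hN
    have hε : 0 < 1 / (4 * (1 + Real.pi ^ 2 * N)) := by positivity
    simp only [Function.comp]
    rw [(hshift _ hε).2, mul_assoc, ← integral_const_mul]
    congr 2
    ext τ
    rw [hK _ (by rw [hcd]; simpa using hlc), hcd, hf]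
    beta_reduce
    rw [Complex.cpow_def_of_ne_zero hxc, ← Complex.ofReal_log hx.le]
    set s := (c':ℂ) + τ * Complex.I with hs
    have e : Complex.exp ((Real.log x : ℂ) * -s) = Complex.exp (-(s * L)) * Complex.exp (s * w) := by
      rw [← Complex.exp_add]; congr 1; rw [hwdef]; push_cast; ring
    rw [e]; ring

lemma qq_eq {p q : ℕ} (A a : Fin p → ℝ) (B b : Fin q → ℝ) (hA : ∀ k, 0 < A k) (hB : ∀ j, 0 < B j)
    (hsum : ∑ i, A i = ∑ j, B j) (t : ℝ) :
    qq A a B b t = (∑ i, (Real.exp (-t)) ^ (a i / A i) / (1 - (Real.exp (-t)) ^ (1 / A i))) -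
        ∑ j, (Real.exp (-t)) ^ (b j / B j) / (1 - (Real.exp (-t)) ^ (1 / B j)) := by
  have h : ∀ A a : ℝ, 0 < A → JJ a (t / A) = A / t - (Real.exp (-t)) ^ (a / A) / (1 - (Real.exp (-t)) ^ (1 / A)) := by
    intro A a hA
    rw [JJ, ← Real.exp_mul, ← Real.exp_mul]
    congr 1
    · rw [one_div_div]
    · congr 2
      · ring
      · congr 1; ring_nf
  unfold qq
  simp only [h _ _ (hA _), h _ _ (hB _), Finset.sum_sub_distrib, ← Finset.sum_div, hsum]
  ring

theorem stmt17 (p q : ℕ) (hp : 1 ≤ p) (hq : 1 ≤ q)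
    (A : Fin p → ℝ) (B : Fin q → ℝ) (a : Fin p → ℝ) (b : Fin q → ℝ)
    (hA : ∀ k, 0 < A k) (hB : ∀ j, 0 < B j)
    (ha : ∀ k, 0 ≤ a k) (hb : ∀ j, 0 ≤ b j)
    (hsum : ∑ i, A i = ∑ j, B j)
    (hμ : 0 < (∑ j, b j) - (∑ k, a k) + ((p : ℝ) - (q : ℝ)) / 2)
    (ρ : ℝ) (hρ : ρ = (∏ k, A k ^ A k) * ∏ j, B j ^ (-B j)) (hρ1 : ρ ≤ 1)
    (γ : ℝ) (hγ : γ = -(⨅ k, a k / A k))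
    (c : ℝ) (hc : γ < c)
    (H : ℝ → ℝ)
    (hH : ∀ x ∈ Set.Ioo (0 : ℝ) ρ,
      Tendsto (fun R : ℝ => (((2 * Real.pi)⁻¹ : ℝ) : ℂ) *
        ∫ t in -R..R,
          (∏ k, Complex.Gamma ((A k : ℂ) * ((c : ℂ) + (t : ℂ) * Complex.I) + (a k : ℂ))) /
            (∏ j, Complex.Gamma ((B j : ℂ) * ((c : ℂ) + (t : ℂ) * Complex.I) + (b j : ℂ))) *
            (x : ℂ) ^ (-((c : ℂ) + (t : ℂ) * Complex.I)))
        atTop (nhds ((H x : ℂ))))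
    (Q : ℝ → ℝ)
    (hQ : ∀ u ∈ Set.Ioo (0 : ℝ) 1,
      Q u = (∑ i, u ^ (a i / A i) / (1 - u ^ (1 / A i))) -
        ∑ j, u ^ (b j / B j) / (1 - u ^ (1 / B j))) :
    ∀ x ∈ Set.Ioo (0 : ℝ) ρ,
      H x = (1 / Real.log (ρ / x)) * ∫ u in (x / ρ)..1, H (x / u) * Q u / u := by
  set μ := (∑ j, b j) - (∑ k, a k) + ((p : ℝ) - (q : ℝ)) / 2 with hμdef
  have hA1 : 0 < ∏ k, A k ^ A k := Finset.prod_pos fun k _ => Real.rpow_pos_of_pos (hA k) _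
  have hB1 : 0 < ∏ j, B j ^ (-B j) := Finset.prod_pos fun k _ => Real.rpow_pos_of_pos (hB k) _
  have hρ0 : 0 < ρ := by rw [hρ]; positivity
  have hL : Real.log ρ = ∑ i, A i * Real.log (A i) - ∑ j, B j * Real.log (B j) := by
    rw [hρ, Real.log_mul hA1.ne' hB1.ne', Real.log_prod fun k _ => (Real.rpow_pos_of_pos (hA k) _).ne',
      Real.log_prod fun k _ => (Real.rpow_pos_of_pos (hB k) _).ne', sub_eq_add_neg, ← Finset.sum_neg_distrib]
    congr 1
    · exact Finset.sum_congr rfl fun i _ => Real.log_rpow (hA i) _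
    · exact Finset.sum_congr rfl fun i _ => by rw [Real.log_rpow (hB i)]; ring
  have hcpos : ∀ k, 0 < A k * c + a k := by
    intro k
    have h1 : (⨅ k, a k / A k) ≤ a k / A k := ciInf_le (Set.finite_range _).bddBelow k
    have h2 : -(a k / A k) < c := by linarith
    have h3 := mul_lt_mul_of_pos_left h2 (hA k)
    have h4 : A k * -(a k / A k) = - a k := by field_simp [(hA k).ne']
    linarith
  obtain ⟨M, hM⟩ := qq_bound A a B b hA hB ha hb
  obtain ⟨l, C, hl, m, hm, hm0, hmb, hv⟩ := volterra μ M hμ (qq A a B b) (qq_cont A a B b hA hB)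
    (fun v hv => (hM v hv).2)
  obtain ⟨κ, hκ⟩ := K_complex A a B b hA hB ha hb hsum (Real.log ρ) hL μ l C hμ hl m hm hmb hv
  have htr : ∀ w, 0 < w → κ * H (ρ * Real.exp (-w)) = w ^ (μ - 1) * m w := by
    intro w hw
    have hx : 0 < ρ * Real.exp (-w) := by positivity
    have hlog : Real.log ρ - Real.log (ρ * Real.exp (-w)) = w := by
      rw [Real.log_mul hρ0.ne' (Real.exp_pos _).ne', Real.log_exp]; ring
    have := transfer A a B b hA hB c hcpos (Real.log ρ) μ l C hμ m hm hmb κ hκ (ρ * Real.exp (-w)) hx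
      (by rw [hlog]; exact hw) (H (ρ * Real.exp (-w)))
      (hH _ ⟨hx, by
        have : Real.exp (-w) < 1 := Real.exp_lt_one_iff.2 (by linarith)
        nlinarith⟩)
    rwa [hlog] at this
  have hκ0 : κ ≠ 0 := by
    intro h0
    have h1 : ∀ w, 0 < w → m w = 0 := by
      intro w hw
      have := htr w hw
      rw [h0, zero_mul] at this
      exact (mul_eq_zero.1 this.symm).resolve_left (Real.rpow_pos_of_pos hw _).ne'
    have h2 : Tendsto m (nhdsWithin 0 (Set.Ioi 0)) (nhds (m 0)) := (hm.tendsto 0).mono_left nhdsWithin_le_nhds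
    have h3 : Tendsto m (nhdsWithin 0 (Set.Ioi 0)) (nhds 0) := by
      refine tendsto_const_nhds.congr' ?_
      filter_upwards [self_mem_nhdsWithin] with w hw
      exact (h1 w hw).symm
    have := tendsto_nhds_unique h2 h3
    rw [hm0] at this
    exact one_ne_zero this
  intro x hx
  obtain ⟨hx0, hxρ⟩ := hx
  have hy0 : 0 < x / ρ := by positivity
  set W := Real.log (ρ / x) with hW
  have hW0 : 0 < W := Real.log_pos ((one_lt_div hx0).2 hxρ)
  have hyW : x / ρ = Real.exp (-W) := by
    rw [hW, Real.exp_neg, Real.exp_log (by positivity), inv_div]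
  have hy1 : x / ρ ≤ 1 := by rw [hyW]; exact Real.exp_le_one_iff.2 (by linarith)
  have hxW : x = ρ * Real.exp (-W) := by rw [← hyW]; field_simp
  have himg : (fun v => Real.exp (v - W)) '' Set.Ioo 0 W = Set.Ioo (x / ρ) 1 := by
    rw [hyW]
    ext y
    constructor
    · rintro ⟨v, ⟨h1, h2⟩, rfl⟩
      exact ⟨Real.exp_lt_exp.2 (by linarith), Real.exp_lt_one_iff.2 (by linarith)⟩
    · rintro ⟨h1, h2⟩
      have hy : 0 < y := (Real.exp_pos _).trans h1
      refine ⟨Real.log y + W, ⟨?_, ?_⟩, ?_⟩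
      · have := (Real.lt_log_iff_exp_lt hy).2 h1
        linarith
      · have := Real.log_neg hy h2
        linarith
      · beta_reduce
        rw [add_sub_cancel_right, Real.exp_log hy]
  have hcv := integral_image_eq_integral_abs_deriv_smul (s := Set.Ioo 0 W) (f := fun v => Real.exp (v - W))
    (f' := fun v => Real.exp (v - W)) measurableSet_Ioo
    (fun v _ => by
      have := ((hasDerivAt_id v).sub_const W).exp
      rw [mul_one] at this
      exact this.hasDerivWithinAt)
    (fun v _ w _ h => by
      have := Real.exp_injective h
      linarith)
    (fun u => κ * (H (x / u) * Q u / u))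
  rw [himg] at hcv
  have hmain : κ * ∫ u in (x / ρ)..1, H (x / u) * Q u / u = W * (κ * H x) := by
    rw [intervalIntegral.integral_of_le hy1, integral_Ioc_eq_integral_Ioo, ← integral_const_mul, hcv]
    have h1 := htr W hW0
    rw [← hxW] at h1
    rw [h1, ← mul_assoc, mul_comm W, ← Real.rpow_add_one hW0.ne', sub_add_cancel, hv W hW0,
      intervalIntegral.integral_of_le hW0.le, integral_Ioc_eq_integral_Ioo]
    refine setIntegral_congr_fun measurableSet_Ioo fun v hv => ?_
    obtain ⟨hv0, hv1⟩ := hv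
    beta_reduce
    have e1 : x / Real.exp (v - W) = ρ * Real.exp (-v) := by
      rw [hxW, mul_div_assoc, ← Real.exp_sub]; congr 2; ring
    have e2 : Q (Real.exp (v - W)) = qq A a B b (W - v) := by
      rw [hQ _ ⟨Real.exp_pos _, Real.exp_lt_one_iff.2 (by linarith)⟩, qq_eq A a B b hA hB hsum, neg_sub]
    rw [e1, e2, smul_eq_mul, abs_of_pos (Real.exp_pos _), ← htr v hv0]
    have := (Real.exp_pos (v - W)).ne'
    field_simp
  have hfin : (∫ u in (x / ρ)..1, H (x / u) * Q u / u) = W * H x := by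
    apply mul_left_cancel₀ hκ0
    rw [hmain]; ring
  rw [hfin, ← mul_assoc, one_div, inv_mul_cancel₀ hW0.ne', one_mul]
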